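/- Let R > 0 be fixed. There exist positive constants A = A(R) and B = B(R) such that for all sufficiently large x and all integers k with 1 ≤ k ≤ R·log log x, one has #{n ≤ x : ω(n²+1) = k} ≤ A·x·(log log x + B)^{k−1} / ((k−1)!·log x). -/

import Mathlib

/-- number of roots of `r^2+1` modulo `n` -/
def rho (n : ℕ) : ℕ := ((Finset.range n).filter (fun r => n ∣ r ^ 2 + 1)).card

theorem rho_le_self (n : ℕ) : rho n ≤ n := by
  unfold rho
  exact (Finset.card_filter_le _ _).trans (by simp)

theorem dvd_sq_congr {n a b : ℕ} (h : a ≡ b [MOD n]) : n ∣ a ^ 2 + 1 ↔ n ∣ b ^ 2 + 1 :=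
  ((h.pow 2).add_right 1).dvd_iff dvd_rfl

theorem rho_mul {m n : ℕ} (h : m.Coprime n) : rho (m * n) = rho m * rho n := by
  rcases Nat.eq_zero_or_pos m with rfl | hm
  · simp [rho]
  rcases Nat.eq_zero_or_pos n with rfl | hn
  · simp [rho]
  unfold rho
  rw [← Finset.card_product]
  refine Finset.card_bij (fun r _ => (r % m, r % n)) ?_ ?_ ?_
  · intro r hr
    simp only [Finset.mem_filter, Finset.mem_range, Finset.mem_product] at hr ⊢
    refine ⟨⟨Nat.mod_lt _ hm, ?_⟩, ⟨Nat.mod_lt _ hn, ?_⟩⟩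
    · exact (dvd_sq_congr (Nat.mod_modEq r m)).2 ((dvd_mul_right m n).trans hr.2)
    · exact (dvd_sq_congr (Nat.mod_modEq r n)).2 ((dvd_mul_left n m).trans hr.2)
  · intro r hr s hs hrs
    simp only [Finset.mem_filter, Finset.mem_range, Prod.mk.injEq] at hr hs hrs
    have : r ≡ s [MOD m * n] := (Nat.modEq_and_modEq_iff_modEq_mul h).1 ⟨hrs.1, hrs.2⟩
    exact Nat.ModEq.eq_of_lt_of_lt this hr.1 hs.1
  · rintro ⟨u, v⟩ huv
    simp only [Finset.mem_filter, Finset.mem_range, Finset.mem_product] at huv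
    obtain ⟨k, hk1, hk2⟩ := Nat.chineseRemainder h u v
    have e1 : k % (m * n) ≡ u [MOD m] :=
      ((Nat.mod_modEq k (m * n)).of_dvd (dvd_mul_right m n)).trans hk1
    have e2 : k % (m * n) ≡ v [MOD n] :=
      ((Nat.mod_modEq k (m * n)).of_dvd (dvd_mul_left n m)).trans hk2
    refine ⟨k % (m * n), ?_, ?_⟩
    · simp only [Finset.mem_filter, Finset.mem_range]
      refine ⟨Nat.mod_lt _ (Nat.mul_pos hm hn), ?_⟩
      exact h.mul_dvd_of_dvd_of_dvd ((dvd_sq_congr e1).2 huv.1.2) ((dvd_sq_congr e2).2 huv.2.2)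
    · have e1' : k % (m * n) % m = u % m := e1
      have e2' : k % (m * n) % n = v % n := e2
      rw [Prod.mk.injEq, e1', e2', Nat.mod_eq_of_lt huv.1.1, Nat.mod_eq_of_lt huv.2.1]
      exact ⟨rfl, rfl⟩

theorem rho_one : rho 1 = 1 := by decide

theorem rho_count (q N : ℕ) (hq : 0 < q) :
    |(((Finset.Icc 1 N).filter (fun n => q ∣ n ^ 2 + 1)).card : ℝ) - N * (rho q / q : ℝ)|
      ≤ rho q := by
  have key : ((Finset.Icc 1 N).filter (fun n => q ∣ n ^ 2 + 1)).card
      = ∑ r ∈ (Finset.range q).filter (fun r => q ∣ r ^ 2 + 1),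
        ((Finset.Ioc 0 N).filter (fun n => n ≡ r [MOD q])).card := by
    rw [← Finset.card_biUnion]
    · congr 1
      ext n
      simp only [Finset.mem_filter, Finset.mem_Icc, Finset.mem_biUnion, Finset.mem_range,
        Finset.mem_Ioc]
      constructor
      · rintro ⟨⟨h1, h2⟩, h3⟩
        exact ⟨n % q, ⟨Nat.mod_lt _ hq, (dvd_sq_congr (Nat.mod_modEq n q)).2 h3⟩, ⟨h1, h2⟩,
          (Nat.mod_modEq n q).symm⟩
      · rintro ⟨r, ⟨_, h2⟩, ⟨h3, h4⟩, h5⟩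
        exact ⟨⟨h3, h4⟩, (dvd_sq_congr h5).2 h2⟩
    · intro r hr s hs hrs
      rw [Function.onFun, Finset.disjoint_left]
      intro n hn hn'
      simp only [Finset.coe_filter, Finset.mem_range, Set.mem_ofPred_eq, Finset.mem_filter] at *
      exact hrs (Nat.ModEq.eq_of_lt_of_lt (hn.2.symm.trans hn'.2) hr.1 hs.1)
  have each : ∀ r ∈ (Finset.range q).filter (fun r => q ∣ r ^ 2 + 1),
      |(((Finset.Ioc 0 N).filter (fun n => n ≡ r [MOD q])).card : ℝ) - N / q| ≤ 1 := by
    intro r _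
    have h := Nat.Ioc_filter_modEq_card (r := q) 0 N hq r
    have hq' : (0 : ℚ) < q := by exact_mod_cast hq
    have h1 : ((0 : ℕ) - (r : ℚ)) / q ≤ ((N : ℚ) - r) / q := by
      gcongr; simp
    have h2 := Int.floor_le_floor h1
    rw [max_eq_left (by simpa using h2)] at h
    have a1 := Int.floor_le (((N : ℚ) - r) / q)
    have a2 := Int.lt_floor_add_one (((N : ℚ) - r) / q)
    have b1 := Int.floor_le (((0 : ℕ) - (r : ℚ)) / q)
    have b2 := Int.lt_floor_add_one (((0 : ℕ) - (r : ℚ)) / q)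
    have e : (((Finset.Ioc 0 N).filter (fun n => n ≡ r [MOD q])).card : ℚ)
      = (⌊((N : ℚ) - r) / q⌋ : ℚ) - ⌊((0 : ℕ) - (r : ℚ)) / q⌋ := by exact_mod_cast h
    have e2 : ((N : ℚ) - r) / q - ((0 : ℕ) - (r : ℚ)) / q = N / q := by
      field_simp; simp
    have : |(((Finset.Ioc 0 N).filter (fun n => n ≡ r [MOD q])).card : ℚ) - N / q| ≤ 1 := by
      rw [abs_le]; constructor <;> linarith
    have h' := (Rat.cast_le (K := ℝ)).2 this
    rw [Rat.cast_abs] at h'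
    push_cast at h'
    exact h'
  rw [key]
  push_cast
  have : (N : ℝ) * (rho q / q : ℝ) = ∑ r ∈ (Finset.range q).filter (fun r => q ∣ r ^ 2 + 1),
      (N / q : ℝ) := by
    rw [Finset.sum_const, nsmul_eq_mul]; unfold rho; ring
  rw [this, ← Finset.sum_sub_distrib]
  refine (Finset.abs_sum_le_sum_abs _ _).trans ((Finset.sum_le_sum each).trans ?_)
  simp [rho]

theorem rho_prime_pow_le (p v : ℕ) (hp : p.Prime) : rho (p ^ v) ≤ 2 := by
  rcases hp.eq_two_or_odd' with rfl | hodd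
  · -- p = 2
    rcases Nat.lt_or_ge v 2 with hv | hv
    · interval_cases v <;> decide
    · have : rho (2 ^ v) = 0 := by
        unfold rho
        rw [Finset.card_eq_zero, Finset.filter_eq_empty_iff]
        intro r _ h
        have h4 : 4 ∣ r ^ 2 + 1 := (pow_dvd_pow 2 hv : 2 ^ 2 ∣ 2 ^ v).trans h
        have : (r ^ 2 + 1) % 4 = 0 := Nat.mod_eq_zero_of_dvd h4
        have hr : r % 4 = 0 ∨ r % 4 = 1 ∨ r % 4 = 2 ∨ r % 4 = 3 := by omega
        rcases hr with hr | hr | hr | hr <;> simp [Nat.add_mod, Nat.pow_mod, hr] at this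
      omega
  · by_contra hcon
    push Not at hcon
    unfold rho at hcon
    obtain ⟨a, ha, b, hb, c, hc, hab, hac, hbc⟩ := Finset.two_lt_card.1 hcon
    simp only [Finset.mem_filter, Finset.mem_range] at ha hb hc
    have hv : v ≠ 0 := by
      rintro rfl
      simp at ha hb; omega
    have main : ∀ x y : ℕ, p ^ v ∣ x ^ 2 + 1 → p ^ v ∣ y ^ 2 + 1 → x < p ^ v → y < p ^ v → x ≠ y →
        p ^ v ∣ x + y := by
      intro x y hx hy hxl hyl hxy
      have hx' : ((p : ℤ) ^ v) ∣ (x : ℤ) ^ 2 + 1 := by exact_mod_cast hx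
      have hy' : ((p : ℤ) ^ v) ∣ (y : ℤ) ^ 2 + 1 := by exact_mod_cast hy
      have hm : ((p : ℤ) ^ v) ∣ ((x : ℤ) + y) * (x - y) := by
        have := dvd_sub hx' hy'
        have e : (x : ℤ) ^ 2 + 1 - (y ^ 2 + 1) = (x + y) * (x - y) := by ring
        rwa [e] at this
      have hpp : Prime (p : ℤ) := Nat.prime_iff_prime_int.1 hp
      by_cases hd : (p : ℤ) ∣ (x : ℤ) - y
      · have hnd : ¬ (p : ℤ) ∣ (x : ℤ) + y := by
          intro h2
          have h3 : (p : ℤ) ∣ 2 * x := by have := dvd_add h2 hd; ring_nf at this; rwa [mul_comm] at this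
          have hpx : (p : ℤ) ∣ (x : ℤ) ^ 2 + 1 := (dvd_pow_self _ hv).trans hx'
          rcases hpp.dvd_or_dvd h3 with h4 | h4
          · have : p ∣ 2 := by exact_mod_cast h4
            have := (Nat.prime_dvd_prime_iff_eq hp Nat.prime_two).1 this
            subst this
            exact absurd hodd (by decide)
          · have : (p : ℤ) ∣ 1 := by
              have := dvd_sub hpx (dvd_pow h4 two_ne_zero)
              simpa using this
            exact hpp.not_dvd_one this
        have hcop : IsCoprime ((p : ℤ) ^ v) ((x : ℤ) + y) :=
          IsCoprime.pow_left ((Prime.coprime_iff_not_dvd hpp).2 hnd)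
        have h5 := hcop.dvd_of_dvd_mul_left hm
        exfalso
        apply hxy
        have h6 : (x : ℤ) ≡ y [ZMOD ((p ^ v : ℕ) : ℤ)] := by
          rw [Int.modEq_comm, Int.modEq_iff_dvd]; push_cast; exact h5
        exact Nat.ModEq.eq_of_lt_of_lt ((Int.natCast_modEq_iff).1 h6) hxl hyl
      · have hcop : IsCoprime ((p : ℤ) ^ v) ((x : ℤ) - y) :=
          IsCoprime.pow_left ((Prime.coprime_iff_not_dvd hpp).2 hd)
        have h5 := hcop.dvd_of_dvd_mul_right hm
        exact_mod_cast h5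
    have h1 := main a b ha.2 hb.2 ha.1 hb.1 hab
    have h2 := main a c ha.2 hc.2 ha.1 hc.1 hac
    have h3 : b ≡ c [MOD p ^ v] := by
      have : a + b ≡ a + c [MOD p ^ v] :=
        (Nat.modEq_zero_iff_dvd.2 h1).trans (Nat.modEq_zero_iff_dvd.2 h2).symm
      exact Nat.ModEq.add_left_cancel' a this
    exact hbc (Nat.ModEq.eq_of_lt_of_lt h3 hb.1 hc.1)

/-- `χ₄` as a real function on naturals -/
noncomputable def chi (n : ℕ) : ℝ := ((ZMod.χ₄ (n : ZMod 4) : ℤ) : ℝ)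

theorem chi_one_mod {n : ℕ} (h : n % 4 = 1) : chi n = 1 := by
  simp [chi, ZMod.χ₄_nat_one_mod_four h]

theorem chi_three_mod {n : ℕ} (h : n % 4 = 3) : chi n = -1 := by
  simp [chi, ZMod.χ₄_nat_three_mod_four h]

theorem chi_even {n : ℕ} (h : n % 2 = 0) : chi n = 0 := by
  unfold chi
  rw [ZMod.χ₄_nat_eq_if_mod_four, if_pos h]; simp

theorem chi_mul (m n : ℕ) : chi (m * n) = chi m * chi n := by
  unfold chi
  rw [Nat.cast_mul, map_mul, Int.cast_mul]

theorem chi_cases (n : ℕ) : chi n = 1 ∨ chi n = -1 ∨ chi n = 0 := by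
  have : n % 4 = 1 ∨ n % 4 = 3 ∨ n % 2 = 0 := by omega
  rcases this with h | h | h
  · exact Or.inl (chi_one_mod h)
  · exact Or.inr (Or.inl (chi_three_mod h))
  · exact Or.inr (Or.inr (chi_even h))

theorem chi_abs_le (n : ℕ) : |chi n| ≤ 1 := by
  rcases chi_cases n with h | h | h <;> simp [h]

theorem rho_prime (p : ℕ) (hp : p.Prime) : (rho p : ℝ) = 1 + chi p := by
  have : Fact p.Prime := ⟨hp⟩
  rcases hp.eq_two_or_odd with rfl | hodd
  · rw [chi_even (by norm_num)]
    have : rho 2 = 1 := by decide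
    simp [this]
  have h4 : p % 4 = 1 ∨ p % 4 = 3 := by omega
  rcases h4 with h | h
  · rw [chi_one_mod h]
    have hle := rho_prime_pow_le p 1 hp
    rw [pow_one] at hle
    have hge : 2 ≤ rho p := by
      obtain ⟨y, hy⟩ := (ZMod.exists_sq_eq_neg_one_iff (p := p)).2 (by omega)
      have hd : p ∣ y.val ^ 2 + 1 := by
        rw [← ZMod.natCast_eq_zero_iff]
        push_cast
        rw [ZMod.natCast_zmod_val, pow_two, ← hy]; ring
      have hd2 : p ∣ (p - y.val) ^ 2 + 1 := by
        have hlt := ZMod.val_lt y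
        rw [← ZMod.natCast_eq_zero_iff]
        push_cast [Nat.cast_sub hlt.le]
        rw [ZMod.natCast_zmod_val, ZMod.natCast_self, zero_sub, neg_sq, pow_two, ← hy]; ring
      have hy0 : y.val ≠ 0 := by
        intro h0
        rw [h0] at hd
        simp at hd
        exact hp.one_lt.ne' hd
      have : 1 < rho p := by
        unfold rho
        rw [Finset.one_lt_card]
        refine ⟨y.val, ?_, p - y.val, ?_, ?_⟩
        · simp [ZMod.val_lt y, hd]
        · simp only [Finset.mem_filter, Finset.mem_range]
          exact ⟨by have := ZMod.val_lt y; omega, hd2⟩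
        · have := ZMod.val_lt y; omega
      exact this
    have : rho p = 2 := le_antisymm hle hge
    rw [this]; norm_num
  · rw [chi_three_mod h]
    have : rho p = 0 := by
      unfold rho
      rw [Finset.card_eq_zero, Finset.filter_eq_empty_iff]
      intro r _ hr
      have : IsSquare (-1 : ZMod p) := by
        refine ⟨(r : ZMod p), ?_⟩
        rw [← ZMod.natCast_eq_zero_iff] at hr
        push_cast at hr
        linear_combination -hr
      exact ZMod.exists_sq_eq_neg_one_iff.1 this h
    rw [this]; norm_num


theorem alt_sum (c : ℕ → ℝ) (anti : ∀ m n, 1 ≤ m → m ≤ n → c n ≤ c m) (k : ℕ) :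
    (∑ n ∈ Finset.range (4 * k), chi n * c n) + c (4 * k + 1) ≤ c 1 ∧
    (1 ≤ k → c 1 - c 3 ≤ ∑ n ∈ Finset.range (4 * k), chi n * c n) := by
  have step : ∀ k, ∑ n ∈ Finset.range (4 * (k + 1)), chi n * c n
      = (∑ n ∈ Finset.range (4 * k), chi n * c n) + c (4 * k + 1) - c (4 * k + 3) := by
    intro k
    rw [show 4 * (k + 1) = 4 * k + 1 + 1 + 1 + 1 by ring]
    simp only [Finset.sum_range_succ]
    rw [chi_even (n := 4 * k) (by omega), chi_one_mod (n := 4 * k + 1) (by omega),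
      chi_even (n := 4 * k + 1 + 1) (by omega), chi_three_mod (n := 4 * k + 1 + 1 + 1) (by omega)]
    ring
  induction k with
  | zero => simp
  | succ k ih =>
    rw [step]
    refine ⟨?_, fun _ => ?_⟩
    · have := anti (4 * k + 3) (4 * (k + 1) + 1) (by omega) (by omega)
      linarith [ih.1]
    · rcases Nat.eq_zero_or_pos k with rfl | hk
      · simp
      · have := anti (4 * k + 1) (4 * k + 3) (by omega) (by omega)
        linarith [ih.2 hk]

theorem prime_pow_dvd_fact (n p : ℕ) (hp : p.Prime) : p ^ (n / p) ∣ n.factorial := by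
  have h1 : p ^ (n / p) ∣ (p * (n / p)).factorial := by
    rw [pow_dvd_iff_le_emultiplicity, hp.emultiplicity_factorial_mul]
    exact le_add_self
  exact h1.trans (Nat.factorial_dvd_factorial (Nat.mul_div_le n p))

/-- Chebyshev–Mertens upper bound -/
theorem sum_log_div_le (n : ℕ) (hn : 1 ≤ n) :
    ∑ p ∈ Nat.primesLE n, Real.log p / p ≤ Real.log n + Real.log 4 := by
  have hn' : (0 : ℝ) < n := by exact_mod_cast hn
  have h1 : ∏ p ∈ Nat.primesLE n, p ^ (n / p) ∣ n.factorial := by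
    refine Finset.prod_dvd_of_isRelPrime ?_ ?_
    · intro p hp q hq hpq
      exact Nat.coprime_iff_isRelPrime.1 (Nat.Coprime.pow _ _
        ((Nat.coprime_primes (Nat.mem_primesLE.1 hp).2 (Nat.mem_primesLE.1 hq).2).2 hpq))
    · intro p hp
      exact prime_pow_dvd_fact n p (Nat.mem_primesLE.1 hp).2
  have h2 : ∏ p ∈ Nat.primesLE n, p ^ (n / p) ≤ n ^ n :=
    (Nat.le_of_dvd n.factorial_pos h1).trans n.factorial_le_pow
  have h3 : ∑ p ∈ Nat.primesLE n, ((n / p : ℕ) : ℝ) * Real.log p ≤ n * Real.log n := by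
    have h4 : ((∏ p ∈ Nat.primesLE n, p ^ (n / p) : ℕ) : ℝ) ≤ (n : ℝ) ^ n := by exact_mod_cast h2
    have hpos : (0 : ℝ) < ((∏ p ∈ Nat.primesLE n, p ^ (n / p) : ℕ) : ℝ) := by
      have : 0 < ∏ p ∈ Nat.primesLE n, p ^ (n / p) :=
        Finset.prod_pos fun p hp => pow_pos (Nat.mem_primesLE.1 hp).2.pos _
      exact_mod_cast this
    have h5 := Real.log_le_log hpos h4
    rw [Real.log_pow] at h5
    push_cast at h5
    rw [Real.log_prod] at h5
    · simpa [Real.log_pow] using h5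
    · intro p hp
      have := (Nat.mem_primesLE.1 hp).2.pos
      positivity
  have hθ : ∑ p ∈ Nat.primesLE n, Real.log p ≤ Real.log 4 * n := by
    rw [← Chebyshev.theta_eq_sum_primesLE_log]
    exact Chebyshev.theta_le_log4_mul_x hn'.le
  have h6 : ∑ p ∈ Nat.primesLE n, ((n : ℝ) / p - 1) * Real.log p ≤
      ∑ p ∈ Nat.primesLE n, ((n / p : ℕ) : ℝ) * Real.log p := by
    apply Finset.sum_le_sum
    intro p hp
    have hp' := (Nat.mem_primesLE.1 hp).2
    apply mul_le_mul_of_nonneg_right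
    · have := Nat.lt_div_mul_add hp'.pos (a := n)
      have h' : (n : ℝ) ≤ (n / p : ℕ) * p + p := by exact_mod_cast this.le
      have hpp : (0 : ℝ) < p := by exact_mod_cast hp'.pos
      rw [sub_le_iff_le_add, div_le_iff₀ hpp]
      linarith
    · exact Real.log_natCast_nonneg p
  have h7 : ∑ p ∈ Nat.primesLE n, ((n : ℝ) / p - 1) * Real.log p
      = n * (∑ p ∈ Nat.primesLE n, Real.log p / p) - ∑ p ∈ Nat.primesLE n, Real.log p := by
    rw [Finset.mul_sum, ← Finset.sum_sub_distrib]
    apply Finset.sum_congr rfl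
    intro p _
    ring
  have h8 : (n : ℝ) * (∑ p ∈ Nat.primesLE n, Real.log p / p) ≤ n * (Real.log n + Real.log 4) := by
    nlinarith
  exact le_of_mul_le_mul_left h8 hn'

theorem zeta_partial (σ : ℝ) (hσ : 0 < σ) (N : ℕ) :
    ∑ n ∈ Finset.range (N + 2), (n : ℝ) ^ (-(1 + σ)) ≤ 1 + 1 / σ - ((N + 1 : ℕ) : ℝ) ^ (-σ) / σ := by
  induction N with
  | zero =>
    simp [Finset.sum_range_succ]
    rw [Real.zero_rpow (by linarith)]
  | succ N ih =>
    rw [Finset.sum_range_succ]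
    have hm : (0 : ℝ) < ((N + 2 : ℕ) : ℝ) := by positivity
    have hm1 : (0 : ℝ) < ((N + 1 : ℕ) : ℝ) := by positivity
    have key : ((N + 2 : ℕ) : ℝ) ^ (-(1 + σ)) ≤
        (((N + 1 : ℕ) : ℝ) ^ (-σ) - ((N + 2 : ℕ) : ℝ) ^ (-σ)) / σ := by
      rw [le_div_iff₀ hσ]
      have e1 : ((N + 2 : ℕ) : ℝ) ^ (-(1 + σ)) = ((N + 2 : ℕ) : ℝ) ^ (-σ) / ((N + 2 : ℕ) : ℝ) := by
        rw [show -(1 + σ) = -σ - 1 by ring, Real.rpow_sub_one hm.ne']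
      have e2 : ((N + 1 : ℕ) : ℝ) ^ (-σ) =
          ((N + 2 : ℕ) : ℝ) ^ (-σ) * (((N + 1 : ℕ) : ℝ) / ((N + 2 : ℕ) : ℝ)) ^ (-σ) := by
        rw [← Real.mul_rpow hm.le (by positivity)]
        congr 1
        field_simp
      have e3 : 1 + σ / ((N + 2 : ℕ) : ℝ) ≤ (((N + 1 : ℕ) : ℝ) / ((N + 2 : ℕ) : ℝ)) ^ (-σ) := by
        rw [Real.rpow_def_of_pos (by positivity)]
        have l1 := Real.log_le_sub_one_of_pos (show 0 < ((N + 1 : ℕ) : ℝ) / ((N + 2 : ℕ) : ℝ) by positivity)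
        have l2 : ((N + 1 : ℕ) : ℝ) / ((N + 2 : ℕ) : ℝ) - 1 = - (1 / ((N + 2 : ℕ) : ℝ)) := by
          field_simp; push_cast; ring
        have l3 : σ / ((N + 2 : ℕ) : ℝ) ≤ Real.log (((N + 1 : ℕ) : ℝ) / ((N + 2 : ℕ) : ℝ)) * -σ := by
          rw [l2] at l1
          have := mul_le_mul_of_nonneg_right l1 hσ.le
          rw [div_eq_mul_one_div]; nlinarith
        have := Real.add_one_le_exp (Real.log (((N + 1 : ℕ) : ℝ) / ((N + 2 : ℕ) : ℝ)) * -σ)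
        linarith
      rw [e1, e2]
      have hp : 0 < ((N + 2 : ℕ) : ℝ) ^ (-σ) := Real.rpow_pos_of_pos hm _
      have := mul_le_mul_of_nonneg_left e3 hp.le
      calc _ = ((N + 2 : ℕ) : ℝ) ^ (-σ) * (1 + σ / ((N + 2 : ℕ) : ℝ)) - ((N + 2 : ℕ) : ℝ) ^ (-σ) := by ring
        _ ≤ _ := by linarith
    have e : N + 1 + 1 = N + 2 := rfl
    rw [sub_div] at key
    rw [e]
    linarith

noncomputable def fz (s : ℝ) (hs : s ≠ 0) : ℕ →*₀ ℝ where
  toFun n := (n : ℝ) ^ (-s)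
  map_zero' := by simp [Real.zero_rpow (neg_ne_zero.2 hs)]
  map_one' := by simp
  map_mul' m n := by
    push_cast
    exact Real.mul_rpow (Nat.cast_nonneg _) (Nat.cast_nonneg _)

noncomputable def fc (s : ℝ) (hs : s ≠ 0) : ℕ →*₀ ℝ where
  toFun n := chi n * (n : ℝ) ^ (-s)
  map_zero' := by simp [Real.zero_rpow (neg_ne_zero.2 hs)]
  map_one' := by simp [chi_one_mod]
  map_mul' m n := by
    push_cast
    rw [Real.mul_rpow (Nat.cast_nonneg _) (Nat.cast_nonneg _), chi_mul]
    ring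

theorem sum_rho_rpow (σ : ℝ) (hσ : 0 < σ) (n : ℕ) :
    ∑ p ∈ Nat.primesLE n, (1 + chi p) * (p : ℝ) ^ (-(1 + σ)) ≤ Real.log (1 + 1 / σ) := by
  have hs : (1 + σ) ≠ 0 := by linarith
  have sum1 : Summable (fun n : ℕ => ‖fz (1 + σ) hs n‖) := by
    have : Summable (fun n : ℕ => (n : ℝ) ^ (-(1 + σ))) := Real.summable_nat_rpow.2 (by linarith)
    refine this.congr fun n => ?_
    change _ = ‖(n : ℝ) ^ (-(1 + σ))‖
    rw [Real.norm_of_nonneg (Real.rpow_nonneg (Nat.cast_nonneg _) _)]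
  have sum2 : Summable (fun n : ℕ => ‖fc (1 + σ) hs n‖) := by
    refine Summable.of_nonneg_of_le (fun _ => norm_nonneg _) (fun n => ?_) sum1
    change ‖chi n * (n : ℝ) ^ (-(1 + σ))‖ ≤ ‖(n : ℝ) ^ (-(1 + σ))‖
    rw [norm_mul]
    exact mul_le_of_le_one_left (norm_nonneg _) (chi_abs_le n)
  have t1 := EulerProduct.eulerProduct_completely_multiplicative sum1
  have t2 := EulerProduct.eulerProduct_completely_multiplicative sum2
  have t := t1.mul t2
  have z1 : ∑' n, fz (1 + σ) hs n ≤ 1 + 1 / σ := by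
    have h := sum1.of_norm.hasSum.tendsto_sum_nat
    refine le_of_tendsto (h.comp (Filter.tendsto_add_atTop_nat 2)) (Filter.Eventually.of_forall fun N => ?_)
    have := zeta_partial σ hσ N
    have h0 : 0 ≤ ((N + 1 : ℕ) : ℝ) ^ (-σ) / σ := by positivity
    exact le_trans this (by linarith)
  have z2 : ∑' n, fc (1 + σ) hs n ≤ 1 := by
    have h := sum2.of_norm.hasSum.tendsto_sum_nat
    have h4 : Filter.Tendsto (fun k : ℕ => 4 * k) Filter.atTop Filter.atTop :=
      Filter.tendsto_id.const_mul_atTop' (by norm_num)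
    refine le_of_tendsto (h.comp h4) (Filter.Eventually.of_forall fun N => ?_)
    have := (alt_sum (fun n => (n : ℝ) ^ (-(1 + σ))) (fun m n hm hmn =>
      Real.rpow_le_rpow_of_nonpos (by exact_mod_cast hm) (by exact_mod_cast hmn) (by linarith)) N).1
    have h0 : 0 ≤ ((4 * N + 1 : ℕ) : ℝ) ^ (-(1 + σ)) := by positivity
    simp only [Nat.cast_one, Real.one_rpow] at this
    change ∑ n ∈ Finset.range (4 * N), chi n * (n : ℝ) ^ (-(1 + σ)) ≤ 1
    linarith
  have hchi1 : ∀ p : ℕ, 0 ≤ 1 + chi p := fun p => by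
    have := chi_abs_le p; rw [abs_le] at this; linarith
  have lt1 : ∀ p : ℕ, p.Prime → (p : ℝ) ^ (-(1 + σ)) < 1 := by
    intro p hp
    exact Real.rpow_lt_one_of_one_lt_of_neg (by exact_mod_cast hp.one_lt) (by linarith)
  have bound : ∀ m, n + 1 ≤ m → Real.exp (∑ p ∈ Nat.primesLE n, (1 + chi p) * (p : ℝ) ^ (-(1 + σ)))
      ≤ (∏ p ∈ Nat.primesBelow m, (1 - fz (1 + σ) hs p)⁻¹) *
        ∏ p ∈ Nat.primesBelow m, (1 - fc (1 + σ) hs p)⁻¹ := by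
    intro m hm
    have hsub : Nat.primesLE n ⊆ Nat.primesBelow m := by
      intro p hp
      rw [Nat.mem_primesLE] at hp
      rw [Nat.mem_primesBelow]
      exact ⟨by omega, hp.2⟩
    refine (Real.exp_le_exp.2 (Finset.sum_le_sum_of_subset_of_nonneg hsub (fun p _ _ =>
      mul_nonneg (hchi1 p) (by positivity)))).trans ?_
    rw [Real.exp_sum, ← Finset.prod_mul_distrib]
    apply Finset.prod_le_prod (fun _ _ => (Real.exp_pos _).le)
    intro p hp
    have hp' := (Nat.mem_primesBelow.1 hp).2
    change _ ≤ (1 - (p : ℝ) ^ (-(1 + σ)))⁻¹ * (1 - chi p * (p : ℝ) ^ (-(1 + σ)))⁻¹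
    have hpos : 0 < (p : ℝ) ^ (-(1 + σ)) := Real.rpow_pos_of_pos (by exact_mod_cast hp'.pos) _
    have hlt := lt1 p hp'
    have gen : ∀ t : ℝ, t < 1 → Real.exp t ≤ (1 - t)⁻¹ := by
      intro t ht
      rw [le_inv_comm₀ (Real.exp_pos _) (by linarith), ← Real.exp_neg]
      have := Real.add_one_le_exp (-t)
      linarith
    rw [add_mul, one_mul, Real.exp_add]
    refine mul_le_mul (gen _ hlt) (gen _ ?_) (Real.exp_pos _).le ?_
    · have := chi_abs_le p
      rw [abs_le] at this
      nlinarith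
    · exact inv_nonneg.2 (by linarith)
  have hexp : Real.exp (∑ p ∈ Nat.primesLE n, (1 + chi p) * (p : ℝ) ^ (-(1 + σ))) ≤
      (∑' n, fz (1 + σ) hs n) * ∑' n, fc (1 + σ) hs n := by
    refine ge_of_tendsto t ?_
    filter_upwards [Filter.eventually_ge_atTop (n + 1)] with m hm using bound m hm
  have hz0 : 0 ≤ ∑' n, fz (1 + σ) hs n := by
    refine tsum_nonneg fun n => ?_
    change 0 ≤ (n : ℝ) ^ (-(1 + σ))
    positivity
  have : Real.exp (∑ p ∈ Nat.primesLE n, (1 + chi p) * (p : ℝ) ^ (-(1 + σ))) ≤ 1 + 1 / σ := by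
    refine hexp.trans ?_
    calc _ ≤ (∑' n, fz (1 + σ) hs n) * 1 := mul_le_mul_of_nonneg_left z2 hz0
      _ ≤ _ := by rw [mul_one]; exact z1
  rw [Real.le_log_iff_exp_le (by positivity)]
  exact this

theorem sum_rho_div_le : ∃ C : ℝ, ∀ n : ℕ, 2 ≤ n →
    ∑ p ∈ Nat.primesLE n, (1 + chi p) / p ≤ Real.log (Real.log n) + C := by
  refine ⟨Real.log (1 + 1 / Real.log 2) + 2 * (1 + Real.log 4 / Real.log 2), fun n hn => ?_⟩
  have hl2 : 0 < Real.log 2 := Real.log_pos (by norm_num)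
  have hn2 : Real.log 2 ≤ Real.log n := Real.log_le_log (by norm_num) (by exact_mod_cast hn)
  have hl : 0 < Real.log n := hl2.trans_le hn2
  set σ := 1 / Real.log n with hσ
  have hσ0 : 0 < σ := by positivity
  have h1 := sum_rho_rpow σ hσ0 n
  have h2 := sum_log_div_le n (by omega)
  have h3 : ∑ p ∈ Nat.primesLE n, (1 + chi p) / p ≤
      ∑ p ∈ Nat.primesLE n, ((1 + chi p) * (p : ℝ) ^ (-(1 + σ)) + 2 * σ * (Real.log p / p)) := by
    apply Finset.sum_le_sum
    intro p hp
    have hp' := (Nat.mem_primesLE.1 hp).2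
    have hpp : (0 : ℝ) < p := by exact_mod_cast hp'.pos
    have hc := chi_abs_le p
    rw [abs_le] at hc
    have e1 : (p : ℝ) ^ (-(1 + σ)) = (p : ℝ) ^ (-σ) / p := by
      rw [show -(1 + σ) = -σ - 1 by ring, Real.rpow_sub_one hpp.ne']
    have e2 : 1 - σ * Real.log p ≤ (p : ℝ) ^ (-σ) := by
      rw [Real.rpow_def_of_pos hpp]
      have := Real.add_one_le_exp (Real.log p * -σ)
      linarith
    have hlog : 0 ≤ Real.log p := Real.log_natCast_nonneg p
    rw [e1, ← mul_div_assoc, ← mul_div_assoc, ← add_div]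
    apply div_le_div_of_nonneg_right _ hpp.le
    have : 0 ≤ σ * Real.log p := by positivity
    nlinarith
  rw [Finset.sum_add_distrib, ← Finset.mul_sum] at h3
  have h4 : 2 * σ * (∑ p ∈ Nat.primesLE n, Real.log p / p) ≤ 2 * (1 + Real.log 4 / Real.log 2) := by
    have : σ * (∑ p ∈ Nat.primesLE n, Real.log p / p) ≤ σ * (Real.log n + Real.log 4) :=
      mul_le_mul_of_nonneg_left h2 hσ0.le
    have e : σ * (Real.log n + Real.log 4) = 1 + Real.log 4 / Real.log n := by
      rw [hσ]; field_simp
    have h5 : Real.log 4 / Real.log n ≤ Real.log 4 / Real.log 2 := by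
      gcongr
    linarith
  have h5 : Real.log (1 + 1 / σ) ≤ Real.log (Real.log n) + Real.log (1 + 1 / Real.log 2) := by
    rw [← Real.log_mul hl.ne' (by positivity)]
    apply Real.log_le_log (by positivity)
    rw [hσ, one_div_one_div]
    have : 1 ≤ Real.log n * (1 / Real.log 2) := by
      rw [mul_one_div, le_div_iff₀ hl2]; linarith
    linarith
  linarith


noncomputable def hcA : ArithmeticFunction ℝ := ⟨fun n => chi n * (n : ℝ)⁻¹, by simp⟩
noncomputable def hiA : ArithmeticFunction ℝ := ⟨fun n => (n : ℝ)⁻¹, by simp⟩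
noncomputable def hA : ArithmeticFunction ℝ := hcA * hiA

theorem hcA_apply (n : ℕ) : hcA n = chi n * (n : ℝ)⁻¹ := rfl
theorem hiA_apply (n : ℕ) : hiA n = (n : ℝ)⁻¹ := rfl

theorem hA_mult : hA.IsMultiplicative := by
  refine ArithmeticFunction.IsMultiplicative.mul ⟨?_, ?_⟩ ⟨?_, ?_⟩
  · simp [hcA_apply, chi_one_mod]
  · intro m n _
    simp only [hcA_apply, chi_mul]; push_cast; rw [mul_inv]; ring
  · simp [hiA_apply]
  · intro m n _
    simp only [hiA_apply]; push_cast; rw [mul_inv]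

theorem chi_pow (p i : ℕ) : chi (p ^ i) = chi p ^ i := by
  induction i with
  | zero => simp [chi_one_mod]
  | succ i ih => rw [pow_succ, chi_mul, ih, pow_succ]

theorem hA_prime_pow (p v : ℕ) (hp : p.Prime) :
    hA (p ^ v) = (∑ i ∈ Finset.range (v + 1), chi p ^ i) * ((p : ℝ)⁻¹) ^ v := by
  unfold hA
  rw [ArithmeticFunction.mul_apply,
    Nat.sum_divisorsAntidiagonal (fun i j => hcA i * hiA j) (n := p ^ v),
    Nat.sum_divisors_prime_pow hp, Finset.sum_mul]
  apply Finset.sum_congr rfl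
  intro i hi
  have hi' : i ≤ v := by simpa [Nat.lt_succ_iff] using hi
  rw [Nat.pow_div hi' hp.pos, hcA_apply, hiA_apply, chi_pow]
  push_cast
  rw [← inv_pow, ← inv_pow, mul_assoc, ← pow_add, Nat.add_sub_cancel' hi']

theorem chi_geom (p v : ℕ) : 0 ≤ ∑ i ∈ Finset.range (v + 1), chi p ^ i ∧
    ∑ i ∈ Finset.range (v + 1), chi p ^ i ≤ v + 1 := by
  constructor
  · rcases chi_cases p with h | h | h
    · rw [h]; simp; positivity
    · rw [h, neg_one_geom_sum]; split_ifs <;> norm_num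
    · rw [h, Finset.sum_range_succ']; simp
  · calc _ ≤ ∑ i ∈ Finset.range (v + 1), (1 : ℝ) := by
          apply Finset.sum_le_sum
          intro i _
          calc chi p ^ i ≤ |chi p ^ i| := le_abs_self _
            _ = |chi p| ^ i := abs_pow _ _
            _ ≤ 1 := pow_le_one₀ (abs_nonneg _) (chi_abs_le p)
      _ = _ := by simp

theorem hA_nonneg (n : ℕ) : 0 ≤ hA n := by
  rcases Nat.eq_zero_or_pos n with rfl | hn
  · simp
  rw [hA_mult.multiplicative_factorization hA hn.ne', Finsupp.prod]
  apply Finset.prod_nonneg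
  intro p hp
  have hp' := Nat.prime_of_mem_primeFactors hp
  rw [hA_prime_pow _ _ hp']
  exact mul_nonneg (chi_geom _ _).1 (by positivity)

theorem sq_geom (t : ℝ) (h0 : 0 ≤ t) (h1 : t < 1) (V : ℕ) :
    ∑ v ∈ Finset.range V, ((v : ℝ) + 1) * t ^ v ≤ ((1 - t) ^ 2)⁻¹ := by
  have key : (1 - t) ^ 2 * ∑ v ∈ Finset.range V, ((v : ℝ) + 1) * t ^ v
      = 1 - (V + 1) * t ^ V + V * t ^ (V + 1) := by
    induction V with
    | zero => simp
    | succ V ih => rw [Finset.sum_range_succ, mul_add, ih]; push_cast; ring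
  have hp : 0 < (1 - t) ^ 2 := by have : 0 < 1 - t := by linarith
                                  positivity
  rw [← one_div, le_div_iff₀ hp, mul_comm, key]
  have h2 : t ^ (V + 1) ≤ t ^ V := pow_le_pow_of_le_one h0 h1.le (by omega)
  have h3 : 0 ≤ t ^ V := by positivity
  have h4 : (0 : ℝ) ≤ V := by positivity
  nlinarith

noncomputable def cc (p : ℕ) : ℝ := ((1 - (p : ℝ)⁻¹) ^ 2)⁻¹

theorem prime_inv {p : ℕ} (hp : p.Prime) : 0 < (p : ℝ)⁻¹ ∧ (p : ℝ)⁻¹ ≤ 1 / 2 := by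
  have : (2 : ℝ) ≤ p := by exact_mod_cast hp.two_le
  refine ⟨by positivity, ?_⟩
  rw [← one_div]
  exact one_div_le_one_div_of_le (by norm_num) this

theorem one_le_cc {p : ℕ} (hp : p.Prime) : 1 ≤ cc p := by
  have := prime_inv hp
  unfold cc
  rw [one_le_inv₀ (by nlinarith)]
  nlinarith

theorem hA_local (p V : ℕ) (hp : p.Prime) : ∑ v ∈ Finset.range V, hA (p ^ v) ≤ cc p := by
  have := prime_inv hp
  refine le_trans ?_ (sq_geom (p : ℝ)⁻¹ this.1.le (by linarith) V)
  apply Finset.sum_le_sum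
  intro v _
  rw [hA_prime_pow _ _ hp]
  exact mul_le_mul_of_nonneg_right (chi_geom p v).2 (by positivity)

theorem hA_local_three (p V : ℕ) (hp : p.Prime) (h3 : p % 4 = 3) :
    ∑ v ∈ Finset.range V, hA (p ^ v) ≤ (1 - ((p : ℝ)⁻¹) ^ 2)⁻¹ := by
  have ht := prime_inv hp
  have h1 : ∀ k, ∑ v ∈ Finset.range (2 * k), hA (p ^ v) =
      ∑ j ∈ Finset.range k, (((p : ℝ)⁻¹) ^ 2) ^ j := by
    intro k
    induction k with
    | zero => simp
    | succ k ih =>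
      rw [show 2 * (k + 1) = 2 * k + 1 + 1 by ring, Finset.sum_range_succ, Finset.sum_range_succ, ih,
        Finset.sum_range_succ, hA_prime_pow _ _ hp, hA_prime_pow _ _ hp, chi_three_mod h3,
        neg_one_geom_sum, neg_one_geom_sum, if_neg (by grind), if_pos (by grind), ← pow_mul]
      ring
  have h2 : ∑ v ∈ Finset.range V, hA (p ^ v) ≤ ∑ v ∈ Finset.range (2 * V), hA (p ^ v) :=
    Finset.sum_le_sum_of_subset_of_nonneg (by
      intro a; simp only [Finset.mem_range]; omega) (fun _ _ _ => hA_nonneg _)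
  refine h2.trans ?_
  rw [h1]
  have hs : ((p : ℝ)⁻¹) ^ 2 < 1 := by nlinarith
  exact (hasSum_geometric_of_lt_one (by positivity) hs).summable.sum_le_tsum _
    (fun _ _ => by positivity) |>.trans (tsum_geometric_of_lt_one (by positivity) hs).le

theorem hA_local_one (p V : ℕ) (hp : p.Prime) (h1 : p % 4 = 1) :
    ∑ v ∈ Finset.range V, hA (p ^ (v + 1)) ≤ (2 / p : ℝ) * (1 - 2 / p : ℝ)⁻¹ := by
  have h5 : 5 ≤ p := by
    have := hp.two_le
    by_contra h
    have : p = 2 ∨ p = 3 ∨ p = 4 := by omega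
    omega
  have h5' : (5 : ℝ) ≤ p := by exact_mod_cast h5
  have h := hA_local p (V + 1) hp
  rw [Finset.sum_range_succ', pow_zero, hA_mult.1] at h
  have : cc p - 1 ≤ (2 / p : ℝ) * (1 - 2 / p : ℝ)⁻¹ := by
    have e : (2 / p : ℝ) * (1 - 2 / p : ℝ)⁻¹ = 2 / (p - 2) := by
      have : (p : ℝ) - 2 ≠ 0 := by linarith
      have h0 : (p : ℝ) ≠ 0 := by linarith
      have : (1 - 2 / p : ℝ) ≠ 0 := by
        rw [sub_ne_zero, ne_comm, Ne, div_eq_one_iff_eq h0]; linarith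
      field_simp
    have e2 : cc p = p ^ 2 / (p - 1) ^ 2 := by
      unfold cc
      have : (p : ℝ) - 1 ≠ 0 := by linarith
      have h0 : (p : ℝ) ≠ 0 := by linarith
      have : 1 - (p : ℝ)⁻¹ = (p - 1) / p := by field_simp
      rw [this]; field_simp
    rw [e, e2, sub_le_iff_le_add, div_add_one (by linarith),
      div_le_div_iff₀ (by nlinarith) (by linarith)]
    nlinarith
  linarith

theorem hA_sum_lower (N : ℕ) (hN : 1 ≤ N) : 2 / 3 * Real.log N ≤ ∑ n ∈ Finset.Icc 1 N, hA n := by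
  have hIcc : ∀ N, Finset.Icc 1 N = Finset.Ioc 0 N := by
    intro N; ext; simp [Nat.succ_le_iff]
  rw [hIcc]
  unfold hA
  rw [ArithmeticFunction.sum_Ioc_mul_eq_sum_sum]
  set c : ℕ → ℝ := fun d => (d : ℝ)⁻¹ * ∑ m ∈ Finset.Ioc 0 (N / d), hiA m with hc
  have hpos : ∀ n, 0 ≤ hiA n := fun n => by rw [hiA_apply]; positivity
  have mono : ∀ a b, a ≤ b → ∑ m ∈ Finset.Ioc 0 a, hiA m ≤ ∑ m ∈ Finset.Ioc 0 b, hiA m := by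
    intro a b hab
    exact Finset.sum_le_sum_of_subset_of_nonneg (Finset.Ioc_subset_Ioc_right hab)
      (fun _ _ _ => hpos _)
  have anti : ∀ m n, 1 ≤ m → m ≤ n → c n ≤ c m := by
    intro m n hm hmn
    have hm' : (0 : ℝ) < m := by exact_mod_cast hm
    have : (m : ℝ) ≤ n := by exact_mod_cast hmn
    refine mul_le_mul (inv_anti₀ hm' this) (mono _ _ (Nat.div_le_div_left hmn hm))
      (Finset.sum_nonneg fun _ _ => hpos _) (by positivity)
  have key := (alt_sum c anti N).2 hN
  have e : ∑ n ∈ Finset.range (4 * N), chi n * c n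
      = ∑ n ∈ Finset.Ioc 0 N, hcA n * ∑ m ∈ Finset.Ioc 0 (N / n), hiA m := by
    symm
    calc _ = ∑ n ∈ Finset.Ioc 0 N, chi n * c n := by
          apply Finset.sum_congr rfl
          intro n _
          rw [hcA_apply, hc]; ring
      _ = _ := by
          apply Finset.sum_subset
          · intro n; simp only [Finset.mem_Ioc, Finset.mem_range]; omega
          · intro n _ hn
            simp only [Finset.mem_Ioc, not_and_or, not_lt, not_le] at hn
            rcases hn with hn | hn
            · have : n = 0 := by omega
              subst this
              simp [hc]
            · simp [hc, Nat.div_eq_of_lt hn]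
  rw [e] at key
  refine le_trans ?_ key
  have h1 : Real.log N ≤ ∑ m ∈ Finset.Ioc 0 N, hiA m := by
    have := log_add_one_le_harmonic N
    rw [harmonic_eq_sum_Icc, hIcc] at this
    push_cast at this
    refine le_trans (Real.log_le_log (by exact_mod_cast hN) (by linarith)) this
  have h3 := mono (N / 3) N (Nat.div_le_self _ _)
  simp only [hc, Nat.div_one, Nat.cast_one, inv_one, one_mul]
  push_cast
  linarith

noncomputable def FS (h : ℕ → ℝ) (S : Finset ℕ) (y : ℕ) : ℝ :=
  ∑ n ∈ (Finset.Icc 1 y).filter (fun n => n.primeFactors ⊆ S), h n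

noncomputable def GT (g : ℕ → ℝ) (T : Finset ℕ) (y : ℕ) : ℝ :=
  ∑ t ∈ T.powerset.filter (fun t => ∏ p ∈ t, p ≤ y), ∏ p ∈ t, g p

theorem FS_mono (h : ℕ → ℝ) (hn : ∀ n, 0 ≤ h n) (S : Finset ℕ) {y z : ℕ} (hyz : y ≤ z) :
    FS h S y ≤ FS h S z := by
  apply Finset.sum_le_sum_of_subset_of_nonneg
  · exact Finset.filter_subset_filter _ (Finset.Icc_subset_Icc_right hyz)
  · intros; exact hn _

theorem FS_nonneg (h : ℕ → ℝ) (hn : ∀ n, 0 ≤ h n) (S : Finset ℕ) (y : ℕ) : 0 ≤ FS h S y :=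
  Finset.sum_nonneg fun _ _ => hn _

theorem FS_step (h : ArithmeticFunction ℝ) (hm : h.IsMultiplicative) (hn : ∀ n, 0 ≤ h n)
    (S : Finset ℕ) (p : ℕ) (hp : p.Prime) (y : ℕ) :
    FS h (insert p S) y ≤ ∑ v ∈ Finset.range (y + 1), h (p ^ v) * FS h S (y / p ^ v) := by
  classical
  unfold FS
  simp_rw [Finset.mul_sum]
  rw [Finset.sum_sigma']
  set A := (Finset.Icc 1 y).filter (fun n => n.primeFactors ⊆ insert p S)
  let e : ℕ → (Σ _ : ℕ, ℕ) := fun n => ⟨n.factorization p, n / p ^ n.factorization p⟩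
  have inj : Set.InjOn e A := by
    intro a ha b hb hab
    simp only [e, Sigma.mk.injEq, heq_eq_eq] at hab
    rw [← Nat.ordProj_mul_ordCompl_eq_self a p, ← Nat.ordProj_mul_ordCompl_eq_self b p,
      hab.2, hab.1]
  have e1 : ∑ n ∈ A, h n = ∑ x ∈ A.image e, h (p ^ x.1) * h x.2 := by
    rw [Finset.sum_image inj]
    apply Finset.sum_congr rfl
    intro n hn'
    have hn0 : n ≠ 0 := by
      have := (Finset.mem_Icc.1 (Finset.mem_filter.1 hn').1).1; omega
    simp only [e]
    rw [← hm.map_mul_of_coprime, Nat.ordProj_mul_ordCompl_eq_self]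
    exact (Nat.coprime_ordCompl hp hn0).pow_left _
  rw [e1]
  apply Finset.sum_le_sum_of_subset_of_nonneg
  · intro x hx
    obtain ⟨n, hnA, rfl⟩ := Finset.mem_image.1 hx
    obtain ⟨h1, h2⟩ := Finset.mem_filter.1 hnA
    rw [Finset.mem_Icc] at h1
    have hn0 : n ≠ 0 := by omega
    simp only [e, Finset.mem_sigma, Finset.mem_range, Finset.mem_filter, Finset.mem_Icc]
    refine ⟨?_, ⟨Nat.ordCompl_pos p hn0, Nat.div_le_div_right h1.2⟩, ?_⟩
    · have := Nat.factorization_lt p hn0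
      omega
    · intro q hq
      have hq1 := Nat.prime_of_mem_primeFactors hq
      have hq2 := Nat.dvd_of_mem_primeFactors hq
      refine (Finset.mem_insert.1 (h2 (Nat.mem_primeFactors.2
        ⟨hq1, hq2.trans (Nat.ordCompl_dvd n p), hn0⟩))).resolve_left ?_
      rintro rfl
      exact Nat.not_dvd_ordCompl hp hn0 hq2
  · intro x _ _
    exact mul_nonneg (hn _) (hn _)

theorem GT_insert (g : ℕ → ℝ) (T : Finset ℕ) (p : ℕ) (hp : 0 < p) (hpT : p ∉ T) (y : ℕ) :
    GT g (insert p T) y = GT g T y + g p * GT g T (y / p) := by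
  unfold GT
  rw [Finset.sum_filter, Finset.sum_powerset_insert hpT, Finset.sum_filter, Finset.sum_filter,
    Finset.mul_sum]
  congr 1
  apply Finset.sum_congr rfl
  intro t ht
  have hpt : p ∉ t := fun h => hpT (Finset.mem_powerset.1 ht h)
  rw [Finset.prod_insert hpt, Finset.prod_insert hpt, mul_ite, mul_zero]
  simp_rw [Nat.le_div_iff_mul_le hp, mul_comm]

theorem FS_le_GT (h : ArithmeticFunction ℝ) (hm : h.IsMultiplicative) (hn : ∀ n, 0 ≤ h n)
    (g : ℕ → ℝ) (T : Finset ℕ) (hT : ∀ p ∈ T, p.Prime)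
    (hg : ∀ p ∈ T, ∀ V, ∑ v ∈ Finset.range V, h (p ^ (v + 1)) ≤ g p) :
    ∀ y, FS h T y ≤ GT g T y := by
  classical
  induction T using Finset.induction_on with
  | empty =>
    intro y
    unfold FS GT
    rcases Nat.eq_zero_or_pos y with rfl | hy
    · simp [Finset.filter_singleton]
    · have : (Finset.Icc 1 y).filter (fun n => n.primeFactors ⊆ ∅) = {1} := by
        ext n
        simp only [Finset.mem_filter, Finset.mem_Icc, Finset.subset_empty,
          Nat.primeFactors_eq_empty, Finset.mem_singleton]
        omega
      rw [this]
      have hy1 : 1 ≤ y := hy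
      simp [Finset.filter_singleton, hm.1, hy1]
  | insert p T hpT ih =>
    intro y
    have hp := hT p (Finset.mem_insert_self _ _)
    have ih' := ih (fun q hq => hT q (Finset.mem_insert_of_mem hq))
      (fun q hq => hg q (Finset.mem_insert_of_mem hq))
    refine (FS_step h hm hn T p hp y).trans ?_
    rw [GT_insert g T p hp.pos hpT, Finset.sum_range_succ', add_comm]
    apply add_le_add
    · rw [pow_zero, hm.1, one_mul, Nat.div_one]
      exact ih' y
    · calc _ ≤ ∑ v ∈ Finset.range y, h (p ^ (v + 1)) * FS h T (y / p) := by
            apply Finset.sum_le_sum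
            intro v _
            apply mul_le_mul_of_nonneg_left _ (hn _)
            apply FS_mono h hn
            apply Nat.div_le_div_left _ hp.pos
            exact Nat.le_self_pow (by omega) p
        _ = (∑ v ∈ Finset.range y, h (p ^ (v + 1))) * FS h T (y / p) := by rw [Finset.sum_mul]
        _ ≤ g p * FS h T (y / p) :=
            mul_le_mul_of_nonneg_right (hg p (Finset.mem_insert_self _ _) y) (FS_nonneg h hn _ _)
        _ ≤ _ := by
            apply mul_le_mul_of_nonneg_left (ih' _)
            exact le_trans (Finset.sum_nonneg fun _ _ => hn _) (hg p (Finset.mem_insert_self _ _) 0)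

theorem FS_union_le (h : ArithmeticFunction ℝ) (hm : h.IsMultiplicative) (hn : ∀ n, 0 ≤ h n)
    (H : ℕ → ℝ) (T U : Finset ℕ) (hU : ∀ p ∈ U, p.Prime)
    (hH : ∀ p ∈ U, ∀ V, ∑ v ∈ Finset.range V, h (p ^ v) ≤ H p) (y : ℕ) :
    FS h (U ∪ T) y ≤ (∏ p ∈ U, H p) * FS h T y := by
  classical
  induction U using Finset.induction_on with
  | empty => simp
  | insert p U hpU ih =>
    have hp := hU p (Finset.mem_insert_self _ _)
    have ih' := ih (fun q hq => hU q (Finset.mem_insert_of_mem hq))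
      (fun q hq => hH q (Finset.mem_insert_of_mem hq))
    rw [Finset.insert_union, Finset.prod_insert hpU]
    refine (FS_step h hm hn _ p hp y).trans ?_
    calc _ ≤ ∑ v ∈ Finset.range (y + 1), h (p ^ v) * FS h (U ∪ T) y := by
          apply Finset.sum_le_sum
          intro v _
          apply mul_le_mul_of_nonneg_left _ (hn _)
          exact FS_mono h hn _ (Nat.div_le_self _ _)
      _ = (∑ v ∈ Finset.range (y + 1), h (p ^ v)) * FS h (U ∪ T) y := by rw [Finset.sum_mul]
      _ ≤ H p * FS h (U ∪ T) y :=
          mul_le_mul_of_nonneg_right (hH p (Finset.mem_insert_self _ _) _) (FS_nonneg h hn _ _)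
      _ ≤ H p * ((∏ p ∈ U, H p) * FS h T y) := by
          apply mul_le_mul_of_nonneg_left ih'
          exact le_trans (Finset.sum_nonneg fun _ _ => hn _) (hH p (Finset.mem_insert_self _ _) 0)
      _ = _ := by ring

theorem prod_sq_inv_le (w : ℕ) : ∏ p ∈ Nat.primesLE w, (1 - ((p : ℝ)⁻¹) ^ 2)⁻¹ ≤ 2 := by
  have h1 : ∀ n : ℕ, 2 ≤ n → 1 ≤ (1 - ((n : ℝ)⁻¹) ^ 2)⁻¹ := by
    intro n hn
    have hn' : (2 : ℝ) ≤ n := by exact_mod_cast hn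
    have : (n : ℝ)⁻¹ ≤ 1 / 2 := by
      rw [← one_div]; exact one_div_le_one_div_of_le (by norm_num) hn'
    have h0 : 0 < (n : ℝ)⁻¹ := by positivity
    rw [one_le_inv₀ (by nlinarith)]
    nlinarith
  have h2 : ∀ N : ℕ, ∏ n ∈ Finset.Icc 2 (N + 1), (1 - ((n : ℝ)⁻¹) ^ 2)⁻¹ =
      2 * ((N : ℝ) + 1) / ((N : ℝ) + 2) := by
    intro N
    induction N with
    | zero => norm_num
    | succ N ih =>
      rw [Finset.prod_Icc_succ_top (by omega), ih]
      have a1 : ((N : ℝ) + 2) ≠ 0 := by positivity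
      have a2 : ((N : ℝ) + 1) ≠ 0 := by positivity
      have a3 : ((N : ℝ) + 3) ≠ 0 := by positivity
      have : (1 - (((N + 1 + 1 : ℕ) : ℝ)⁻¹) ^ 2) = (N + 1) * (N + 3) / (N + 2) ^ 2 := by
        push_cast
        rw [show (N : ℝ) + 1 + 1 = N + 2 by ring]
        field_simp
        ring
      rw [this]
      push_cast
      rw [show (N : ℝ) + 1 + 2 = N + 3 by ring]
      field_simp
      ring
  calc _ ≤ ∏ n ∈ Finset.Icc 2 (w + 1), (1 - ((n : ℝ)⁻¹) ^ 2)⁻¹ := by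
        have hsub : Nat.primesLE w ⊆ Finset.Icc 2 (w + 1) := by
          intro p hp
          rw [Nat.mem_primesLE] at hp
          rw [Finset.mem_Icc]
          exact ⟨hp.2.two_le, by omega⟩
        rw [← Finset.prod_sdiff hsub]
        apply le_mul_of_one_le_left
        · apply Finset.prod_nonneg
          intro p hp
          exact zero_le_one.trans (h1 p (Nat.mem_primesLE.1 hp).2.two_le)
        · refine Finset.prod_induction _ (fun z : ℝ => 1 ≤ z) (fun a b ha hb =>
            one_le_mul_of_one_le_of_one_le ha hb) le_rfl ?_
          intro n hn
          exact h1 n (Finset.mem_Icc.1 (Finset.mem_sdiff.1 hn).1).1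
    _ ≤ 2 := by
        rw [h2, div_le_iff₀ (by positivity)]
        linarith


theorem two_inv_cc : cc 2 = 4 := by unfold cc; norm_num

theorem lemmaG (w a : ℕ) (hw : 1 ≤ w) (ha : 1 ≤ a) :
    2 / 3 * Real.log w ≤ 8 * (∏ p ∈ a.primeFactors, cc p) *
      GT (fun p => (2 / (p : ℝ)) * (1 - 2 / (p : ℝ))⁻¹)
        ((Nat.primesLE w).filter (fun p => p % 4 = 1 ∧ ¬ p ∣ a)) w := by
  classical
  set T := (Nat.primesLE w).filter (fun p => p % 4 = 1 ∧ ¬ p ∣ a) with hT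
  set U := Nat.primesLE w \ T with hU
  have hUT : U ∪ T = Nat.primesLE w := Finset.sdiff_union_of_subset (Finset.filter_subset _ _)
  have hpr : ∀ p ∈ Nat.primesLE w, p.Prime := fun p hp => (Nat.mem_primesLE.1 hp).2
  let H : ℕ → ℝ := fun p => (1 - ((p : ℝ)⁻¹) ^ 2)⁻¹ * (if p ∣ a then cc p else 1) *
    (if p = 2 then cc 2 else 1)
  have hsq1 : ∀ p : ℕ, p.Prime → 1 ≤ (1 - ((p : ℝ)⁻¹) ^ 2)⁻¹ := by
    intro p hp
    have hn' : (2 : ℝ) ≤ p := by exact_mod_cast hp.two_le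
    have : (p : ℝ)⁻¹ ≤ 1 / 2 := by
      rw [← one_div]; exact one_div_le_one_div_of_le (by norm_num) hn'
    have h0 : 0 < (p : ℝ)⁻¹ := by positivity
    rw [one_le_inv₀ (by nlinarith)]
    nlinarith
  have hHb : ∀ p ∈ U, ∀ V, ∑ v ∈ Finset.range V, hA (p ^ v) ≤ H p := by
    intro p hp V
    have hpU := Finset.mem_sdiff.1 hp
    have hpp := hpr p hpU.1
    have c1 := one_le_cc hpp
    have c2 := hsq1 p hpp
    have e1 : (1 : ℝ) ≤ (if p ∣ a then cc p else 1) := by split_ifs <;> linarith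
    have e2 : (1 : ℝ) ≤ (if p = 2 then cc 2 else 1) := by
      split_ifs
      · rw [two_inv_cc]; norm_num
      · exact le_rfl
    by_cases h1 : p ∣ a
    · refine (hA_local p V hpp).trans ?_
      simp only [H, if_pos h1]
      have : cc p ≤ (1 - ((p : ℝ)⁻¹) ^ 2)⁻¹ * cc p := le_mul_of_one_le_left (by linarith) c2
      exact this.trans (le_mul_of_one_le_right (by nlinarith) e2)
    · by_cases h2 : p = 2
      · subst h2
        refine (hA_local 2 V hpp).trans ?_
        simp only [H, if_neg h1, if_pos]
        rw [mul_one]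
        exact le_mul_of_one_le_left (by linarith) c2
      · have h3 : p % 4 = 3 := by
          have := hpp.eq_two_or_odd
          have h4 : ¬ (p % 4 = 1) := by
            intro h; apply hpU.2; rw [hT, Finset.mem_filter]; exact ⟨hpU.1, h, h1⟩
          omega
        refine (hA_local_three p V hpp h3).trans ?_
        simp only [H, if_neg h1, if_neg h2, mul_one]
        exact le_rfl
  have hsum : ∑ n ∈ Finset.Icc 1 w, hA n = FS hA (U ∪ T) w := by
    unfold FS
    rw [Finset.filter_true_of_mem]
    intro n hn
    rw [hUT]
    intro p hp
    rw [Finset.mem_Icc] at hn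
    exact Nat.mem_primesLE.2 ⟨(Nat.le_of_mem_primeFactors hp).trans hn.2,
      Nat.prime_of_mem_primeFactors hp⟩
  have hprod : ∏ p ∈ U, H p ≤ 8 * ∏ p ∈ a.primeFactors, cc p := by
    simp only [H]
    rw [Finset.prod_mul_distrib, Finset.prod_mul_distrib]
    have one_le : ∀ (S : Finset ℕ) (f : ℕ → ℝ), (∀ p ∈ S, 1 ≤ f p) → 1 ≤ ∏ p ∈ S, f p := by
      intro S f hf
      exact Finset.prod_induction _ (fun z : ℝ => 1 ≤ z) (fun a b ha hb =>
            one_le_mul_of_one_le_of_one_le ha hb) le_rfl hf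
    have mono : ∀ (S S' : Finset ℕ) (f : ℕ → ℝ), S ⊆ S' → (∀ p ∈ S', 1 ≤ f p) →
        ∏ p ∈ S, f p ≤ ∏ p ∈ S', f p := by
      intro S S' f hs hf
      rw [← Finset.prod_sdiff hs]
      apply le_mul_of_one_le_left (zero_le_one.trans (one_le _ _ fun p hp => hf p (hs hp)))
      exact one_le _ _ fun p hp => hf p (Finset.mem_sdiff.1 hp).1
    have q1 : ∏ p ∈ U, (1 - ((p : ℝ)⁻¹) ^ 2)⁻¹ ≤ 2 :=
      (mono _ _ _ Finset.sdiff_subset (fun p hp => hsq1 p (hpr p hp))).trans (prod_sq_inv_le w)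
    have q2 : ∏ p ∈ U, (if p ∣ a then cc p else 1) ≤ ∏ p ∈ a.primeFactors, cc p := by
      rw [← Finset.prod_filter]
      apply mono
      · intro p hp
        rw [Finset.mem_filter] at hp
        exact Nat.mem_primeFactors.2 ⟨hpr p (Finset.mem_sdiff.1 hp.1).1, hp.2, by omega⟩
      · intro p hp; exact one_le_cc (Nat.prime_of_mem_primeFactors hp)
    have q3 : ∏ p ∈ U, (if p = 2 then cc 2 else 1) ≤ 4 := by
      rw [Finset.prod_ite_eq' U 2 (fun _ => cc 2), two_inv_cc]
      split_ifs <;> norm_num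
    have n1 : 0 ≤ ∏ p ∈ U, (if p ∣ a then cc p else 1) :=
      zero_le_one.trans (one_le _ _ fun p hp => by
        split_ifs
        · exact one_le_cc (hpr p (Finset.mem_sdiff.1 hp).1)
        · exact le_rfl)
    have n2 : 0 ≤ ∏ p ∈ U, (if p = 2 then cc 2 else 1) :=
      zero_le_one.trans (one_le _ _ fun p hp => by
        split_ifs
        · rw [two_inv_cc]; norm_num
        · exact le_rfl)
    calc _ ≤ (2 * ∏ p ∈ a.primeFactors, cc p) * 4 := by
          apply mul_le_mul _ q3 n2
          · exact mul_nonneg zero_le_two (n1.trans q2)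
          · exact mul_le_mul q1 q2 n1 zero_le_two
      _ = _ := by ring
  have hF := FS_union_le hA hA_mult hA_nonneg H T U
    (fun p hp => hpr p (Finset.mem_sdiff.1 hp).1) hHb w
  have hG := FS_le_GT hA hA_mult hA_nonneg (fun p => (2 / (p : ℝ)) * (1 - 2 / (p : ℝ))⁻¹) T
    (fun p hp => hpr p (Finset.mem_filter.1 hp).1)
    (fun p hp V => hA_local_one p V (hpr p (Finset.mem_filter.1 hp).1)
      (Finset.mem_filter.1 hp).2.1) w
  have hL := hA_sum_lower w hw
  rw [hsum] at hL
  have hFn := FS_nonneg hA hA_nonneg T w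
  have hc0 : 0 ≤ ∏ p ∈ a.primeFactors, cc p := Finset.prod_nonneg fun p hp =>
    zero_le_one.trans (one_le_cc (Nat.prime_of_mem_primeFactors hp))
  calc _ ≤ _ := hL
    _ ≤ _ := hF
    _ ≤ (8 * ∏ p ∈ a.primeFactors, cc p) * FS hA T w := mul_le_mul_of_nonneg_right hprod hFn
    _ ≤ _ := mul_le_mul_of_nonneg_left hG (by positivity)


theorem moebius_between (l m : ℕ) (hm : Squarefree m) (hl : l ∣ m) :
    ∑ d ∈ m.divisors.filter (fun d => l ∣ d), (ArithmeticFunction.moebius d : ℝ) =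
      if m = l then (ArithmeticFunction.moebius l : ℝ) else 0 := by
  obtain ⟨e, rfl⟩ := hl
  have hne : l * e ≠ 0 := hm.ne_zero
  have hl0 : l ≠ 0 := left_ne_zero_of_mul hne
  have he0 : e ≠ 0 := right_ne_zero_of_mul hne
  have hcop : l.Coprime e := Nat.coprime_of_squarefree_mul hm
  have himg : (l * e).divisors.filter (fun d => l ∣ d) = e.divisors.image (fun d => l * d) := by
    ext d
    simp only [Finset.mem_filter, Nat.mem_divisors, Finset.mem_image]
    constructor
    · rintro ⟨⟨h1, _⟩, ⟨c, rfl⟩⟩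
      exact ⟨c, ⟨Nat.dvd_of_mul_dvd_mul_left (Nat.pos_of_ne_zero hl0) h1, he0⟩, rfl⟩
    · rintro ⟨c, ⟨h1, _⟩, rfl⟩
      exact ⟨⟨Nat.mul_dvd_mul_left l h1, hne⟩, Dvd.intro _ rfl⟩
  rw [himg, Finset.sum_image (fun a _ b _ h => Nat.eq_of_mul_eq_mul_left (Nat.pos_of_ne_zero hl0) h)]
  have h2 : ∀ d ∈ e.divisors, (ArithmeticFunction.moebius (l * d) : ℝ) =
      (ArithmeticFunction.moebius l : ℝ) * (ArithmeticFunction.moebius d : ℝ) := by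
    intro d hd
    rw [ArithmeticFunction.isMultiplicative_moebius.map_mul_of_coprime
      (hcop.coprime_dvd_right (Nat.dvd_of_mem_divisors hd))]
    push_cast; rfl
  rw [Finset.sum_congr rfl h2, ← Finset.mul_sum]
  have h3 : ∑ d ∈ e.divisors, (ArithmeticFunction.moebius d : ℝ) = if e = 1 then 1 else 0 := by
    have h4 := congrArg (fun F : ArithmeticFunction ℝ => F e)
      (ArithmeticFunction.coe_zeta_mul_coe_moebius (R := ℝ))
    simp only [ArithmeticFunction.coe_zeta_mul_apply, ArithmeticFunction.one_apply,
      ArithmeticFunction.intCoe_apply] at h4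
    exact h4
  rw [h3]
  by_cases h : e = 1
  · simp [h]
  · rw [if_neg h, if_neg]
    · simp
    · intro h'; apply h
      have : l * e = l * 1 := by omega
      exact Nat.eq_of_mul_eq_mul_left (Nat.pos_of_ne_zero hl0) this

namespace BoundingSieve
variable (s : BoundingSieve)

noncomputable def SS (w : ℕ) : ℝ :=
  ∑ l ∈ s.prodPrimes.divisors.filter (fun l => l ≤ w), s.selbergTerms l

noncomputable def sw (w : ℕ) (d : ℕ) : ℝ :=
  (ArithmeticFunction.moebius d : ℝ) / (s.nu d * s.SS w) *
    ∑ l ∈ s.prodPrimes.divisors.filter (fun l => d ∣ l ∧ l ≤ w), s.selbergTerms l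

theorem SS_pos (w : ℕ) (hw : 1 ≤ w) : 0 < s.SS w := by
  unfold SS
  apply Finset.sum_pos
  · intro l hl
    exact selbergTerms_pos (Nat.dvd_of_mem_divisors (Finset.mem_filter.1 hl).1)
  · exact ⟨1, by simp [hw, s.prodPrimes_squarefree.ne_zero]⟩

theorem sw_one (w : ℕ) (hw : 1 ≤ w) : s.sw w 1 = 1 := by
  have := (s.SS_pos w hw).ne'
  unfold sw
  rw [s.nu_mult.1]
  simp only [one_dvd, true_and, ArithmeticFunction.moebius_apply_one, Int.cast_one, one_mul]
  change 1 / s.SS w * s.SS w = 1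
  field_simp

theorem sw_zero (w d : ℕ) (hd : w < d) : s.sw w d = 0 := by
  unfold sw
  rw [Finset.filter_false_of_mem]
  · simp
  · intro l hl h
    have h1 := Nat.le_of_dvd (Nat.pos_of_mem_divisors hl) h.1
    omega

theorem sw_le (w d : ℕ) (hw : 1 ≤ w) (hd : d ∣ s.prodPrimes) : |s.sw w d| ≤ (s.nu d)⁻¹ := by
  have hS := s.SS_pos w hw
  have hn := nu_pos_of_dvd_prodPrimes hd
  unfold sw
  have h1 : ∑ l ∈ s.prodPrimes.divisors.filter (fun l => d ∣ l ∧ l ≤ w), s.selbergTerms l ≤ s.SS w := by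
    apply Finset.sum_le_sum_of_subset_of_nonneg
    · intro l hl
      simp only [Finset.mem_filter] at hl ⊢
      exact ⟨hl.1, hl.2.2⟩
    · intro l hl _
      exact (selbergTerms_pos (Nat.dvd_of_mem_divisors (Finset.mem_filter.1 hl).1)).le
  have h0 : 0 ≤ ∑ l ∈ s.prodPrimes.divisors.filter (fun l => d ∣ l ∧ l ≤ w), s.selbergTerms l :=
    Finset.sum_nonneg fun l hl =>
      (selbergTerms_pos (Nat.dvd_of_mem_divisors (Finset.mem_filter.1 hl).1)).le
  have hmu : |(ArithmeticFunction.moebius d : ℝ)| ≤ 1 := by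
    exact_mod_cast ArithmeticFunction.abs_moebius_le_one
  rw [abs_mul, abs_div, abs_of_nonneg h0, abs_of_pos (mul_pos hn hS)]
  calc _ ≤ 1 / (s.nu d * s.SS w) * s.SS w := by
        apply mul_le_mul _ h1 h0 (by positivity)
        exact div_le_div_of_nonneg_right hmu (by positivity)
    _ = _ := by field_simp

theorem sw_diag (w l : ℕ) (hw : 1 ≤ w) (hl : l ∈ s.prodPrimes.divisors) :
    (∑ d ∈ s.prodPrimes.divisors, if l ∣ d then s.nu d * s.sw w d else 0) =
      if l ≤ w then (ArithmeticFunction.moebius l : ℝ) * s.selbergTerms l / s.SS w else 0 := by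
  have hS := s.SS_pos w hw
  have e1 : ∀ d ∈ s.prodPrimes.divisors, (if l ∣ d then s.nu d * s.sw w d else 0) =
      ∑ m ∈ s.prodPrimes.divisors, if m ≤ w then
        (s.selbergTerms m / s.SS w) * (if (d ∣ m ∧ l ∣ d) then (ArithmeticFunction.moebius d : ℝ) else 0) else 0 := by
    intro d hd
    have hn := nu_pos_of_dvd_prodPrimes (s := s) (Nat.dvd_of_mem_divisors hd)
    by_cases h : l ∣ d
    · simp only [h, if_true, and_true]
      unfold sw
      rw [Finset.sum_filter, Finset.mul_sum, Finset.mul_sum]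
      apply Finset.sum_congr rfl
      intro m _
      by_cases h1 : d ∣ m <;> by_cases h2 : m ≤ w <;> simp [h1, h2]
      field_simp
    · simp [h]
  rw [Finset.sum_congr rfl e1, Finset.sum_comm]
  have e2 : ∀ m ∈ s.prodPrimes.divisors, (∑ d ∈ s.prodPrimes.divisors, if m ≤ w then
        (s.selbergTerms m / s.SS w) * (if (d ∣ m ∧ l ∣ d) then (ArithmeticFunction.moebius d : ℝ) else 0) else 0) =
      if m = l then (if l ≤ w then (ArithmeticFunction.moebius l : ℝ) * s.selbergTerms l / s.SS w else 0) else 0 := by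
    intro m hm
    by_cases hmw : m ≤ w
    · simp only [hmw, if_true]
      rw [← Finset.mul_sum, ← Finset.sum_filter, ← Finset.filter_filter,
        Nat.divisors_filter_dvd_of_dvd prodPrimes_ne_zero (Nat.dvd_of_mem_divisors hm)]
      by_cases hlm : l ∣ m
      · rw [moebius_between l m (squarefree_of_mem_divisors_prodPrimes hm) hlm]
        by_cases h : m = l
        · subst h; simp [hmw]; ring
        · simp [h]
      · rw [Finset.filter_false_of_mem]
        · rw [if_neg (by rintro rfl; exact hlm dvd_rfl)]; simp
        · intro d hd h
          exact hlm (h.trans (Nat.dvd_of_mem_divisors hd))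
    · simp only [hmw, if_false, Finset.sum_const_zero]
      split_ifs with h1 h2
      · omega
      · rfl
      · rfl
  rw [Finset.sum_congr rfl e2, Finset.sum_ite_eq' _ l, if_pos hl]

theorem sw_main (w : ℕ) (hw : 1 ≤ w) : s.mainSum (lambdaSquared (s.sw w)) = (s.SS w)⁻¹ := by
  have hS := s.SS_pos w hw
  rw [mainSum_lambdaSquared_eq_sum_mul_sum_sq]
  have e : ∀ l ∈ s.prodPrimes.divisors, (s.selbergTerms l)⁻¹ *
        (∑ d ∈ s.prodPrimes.divisors, if l ∣ d then s.nu d * s.sw w d else 0) ^ 2 =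
      (if l ≤ w then s.selbergTerms l else 0) / (s.SS w)^2 := by
    intro l hl
    rw [sw_diag s w l hw hl]
    have hg := selbergTerms_pos (s := s) (Nat.dvd_of_mem_divisors hl)
    have hmu : (ArithmeticFunction.moebius l : ℝ) ^ 2 = 1 := by
      exact_mod_cast ArithmeticFunction.moebius_sq_eq_one_of_squarefree (squarefree_of_mem_divisors_prodPrimes hl)
    split_ifs
    · rw [div_pow, mul_pow, hmu]
      field_simp
    · simp
  rw [Finset.sum_congr rfl e, ← Finset.sum_div, ← Finset.sum_filter]
  change s.SS w / _ = _
  field_simp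

theorem sw_err (w : ℕ) (hw : 1 ≤ w) (E : ℝ) (hE : 0 ≤ E)
    (hrem : ∀ d, d ∣ s.prodPrimes → |s.rem d| ≤ E * d)
    (hnu : ∀ d, d ∣ s.prodPrimes → (s.nu d)⁻¹ ≤ d) :
    s.errSum (lambdaSquared (s.sw w)) ≤ E * (w : ℝ) ^ 6 := by
  have hsw : ∀ d, d ∣ s.prodPrimes → |s.sw w d| ≤ w := by
    intro d hd
    rcases le_or_gt d w with h | h
    · exact (s.sw_le w d hw hd).trans ((hnu d hd).trans (by exact_mod_cast h))
    · rw [s.sw_zero w d h]; simp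
  unfold errSum
  have key : ∀ d ∈ s.prodPrimes.divisors, |lambdaSquared (s.sw w) d| * |s.rem d| ≤
      ∑ d1 ∈ Finset.Icc 1 w, ∑ d2 ∈ Finset.Icc 1 w, if d = Nat.lcm d1 d2 then E * (w:ℝ)^4 else 0 := by
    intro d hd
    have hd' := Nat.dvd_of_mem_divisors hd
    have hd0 : d ≠ 0 := (Nat.pos_of_mem_divisors hd).ne'
    have h1 : |lambdaSquared (s.sw w) d| ≤
        ∑ d1 ∈ d.divisors, ∑ d2 ∈ d.divisors, |if d = Nat.lcm d1 d2 then s.sw w d1 * s.sw w d2 else 0| := by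
      unfold lambdaSquared
      refine (Finset.abs_sum_le_sum_abs _ _).trans ?_
      exact Finset.sum_le_sum fun d1 _ => Finset.abs_sum_le_sum_abs _ _
    have h2 : ∑ d1 ∈ d.divisors, ∑ d2 ∈ d.divisors, |if d = Nat.lcm d1 d2 then s.sw w d1 * s.sw w d2 else 0|
        = ∑ d1 ∈ d.divisors.filter (fun e => e ≤ w), ∑ d2 ∈ d.divisors.filter (fun e => e ≤ w),
          |if d = Nat.lcm d1 d2 then s.sw w d1 * s.sw w d2 else 0| := by
      rw [Finset.sum_filter]
      apply Finset.sum_congr rfl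
      intro d1 _
      split_ifs with h
      · rw [Finset.sum_filter]
        apply Finset.sum_congr rfl
        intro d2 _
        split_ifs with h3 h4 h4
        · rfl
        · rw [s.sw_zero w d2 (by omega)]; simp
        · rfl
        · simp
      · rw [s.sw_zero w d1 (by omega)]; simp
    have hsub : d.divisors.filter (fun e => e ≤ w) ⊆ Finset.Icc 1 w := by
      intro e he
      rw [Finset.mem_filter] at he
      exact Finset.mem_Icc.2 ⟨Nat.pos_of_mem_divisors he.1, he.2⟩
    rw [h2] at h1
    refine (mul_le_mul_of_nonneg_right h1 (abs_nonneg _)).trans ?_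
    rw [Finset.sum_mul]
    refine le_trans ?_ (Finset.sum_le_sum_of_subset_of_nonneg hsub ?_)
    · apply Finset.sum_le_sum
      intro d1 hd1
      rw [Finset.sum_mul]
      refine le_trans ?_ (Finset.sum_le_sum_of_subset_of_nonneg hsub ?_)
      · apply Finset.sum_le_sum
        intro d2 hd2
        rw [Finset.mem_filter] at hd1 hd2
        split_ifs with h
        · have a1 := hsw d1 ((Nat.dvd_of_mem_divisors hd1.1).trans hd')
          have a2 := hsw d2 ((Nat.dvd_of_mem_divisors hd2.1).trans hd')
          have a3 := hrem d hd'
          have a4 : (d : ℝ) ≤ (w : ℝ) * w := by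
            have : d ≤ d1 * d2 := by
              have hp : 0 < d1 * d2 := Nat.mul_pos (Nat.pos_of_mem_divisors hd1.1) (Nat.pos_of_mem_divisors hd2.1)
              calc d = Nat.lcm d1 d2 := h
                _ ≤ _ := Nat.le_of_dvd hp (Nat.lcm_dvd_mul d1 d2)
            have h5 : d ≤ w * w := this.trans (Nat.mul_le_mul hd1.2 hd2.2)
            exact_mod_cast h5
          rw [abs_mul]
          calc _ ≤ ((w:ℝ) * w) * (E * ((w:ℝ) * w)) := by
                apply mul_le_mul _ (a3.trans (mul_le_mul_of_nonneg_left a4 hE)) (abs_nonneg _) (by positivity)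
                exact mul_le_mul a1 a2 (abs_nonneg _) (by positivity)
            _ = _ := by ring
        · simp
      · intros; split_ifs <;> positivity
    · intro d1 _ _
      apply Finset.sum_nonneg
      intros; split_ifs <;> positivity
  refine (Finset.sum_le_sum key).trans ?_
  rw [Finset.sum_comm]
  calc _ ≤ ∑ d1 ∈ Finset.Icc 1 w, ∑ d2 ∈ Finset.Icc 1 w, E * (w:ℝ)^4 := by
        apply Finset.sum_le_sum
        intro d1 _
        rw [Finset.sum_comm]
        apply Finset.sum_le_sum
        intro d2 _
        rw [Finset.sum_ite_eq']
        split_ifs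
        · exact le_rfl
        · positivity
    _ = _ := by simp; ring

theorem selberg_bound (w : ℕ) (hw : 1 ≤ w) (E : ℝ) (hE : 0 ≤ E)
    (hrem : ∀ d, d ∣ s.prodPrimes → |s.rem d| ≤ E * d)
    (hnu : ∀ d, d ∣ s.prodPrimes → (s.nu d)⁻¹ ≤ d) :
    s.siftedSum ≤ s.totalMass * (s.SS w)⁻¹ + E * (w : ℝ) ^ 6 := by
  have h := siftedSum_le_mainSum_errSum_of_upperMoebius (s := s) _
    (upperMoebius_lambdaSquared (s.sw w) (s.sw_one w hw))
  rw [s.sw_main w hw] at h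
  linarith [s.sw_err w hw E hE hrem hnu]

end BoundingSieve


noncomputable def nuA : ArithmeticFunction ℝ := ⟨fun n => (rho n : ℝ) / n, by simp⟩

theorem nuA_apply (n : ℕ) : nuA n = (rho n : ℝ) / n := rfl

theorem nuA_mult : nuA.IsMultiplicative := by
  constructor
  · rw [nuA_apply, rho_one]; simp
  · intro m n h
    rw [nuA_apply, nuA_apply, nuA_apply, rho_mul h]
    push_cast
    rw [div_mul_div_comm]

theorem nuA_prime_one (p : ℕ) (hp : p.Prime) (h : p % 4 = 1) : nuA p = 2 / p := by
  rw [nuA_apply, rho_prime p hp, chi_one_mod h]; norm_num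

noncomputable def mySieve (a N w : ℕ) : BoundingSieve where
  support := ((Finset.Icc 1 N).filter (fun n => a ∣ n ^ 2 + 1)).image (fun n => n ^ 2 + 1)
  prodPrimes := ∏ p ∈ (Nat.primesLE w).filter (fun p => p % 4 = 1 ∧ ¬ p ∣ a), p
  prodPrimes_squarefree := by
    apply Finset.squarefree_prod_of_pairwise_isCoprime
    · intro p hp q hq hpq
      have hp' := (Nat.mem_primesLE.1 (Finset.mem_filter.1 hp).1).2
      have hq' := (Nat.mem_primesLE.1 (Finset.mem_filter.1 hq).1).2
      exact Nat.coprime_iff_isRelPrime.1 ((Nat.coprime_primes hp' hq').2 hpq)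
    · intro p hp
      exact (Nat.mem_primesLE.1 (Finset.mem_filter.1 hp).1).2.prime.squarefree
  weights := fun _ => 1
  weights_nonneg := fun _ => zero_le_one
  totalMass := N * (rho a / a : ℝ)
  nu := nuA
  nu_mult := nuA_mult
  nu_pos_of_prime := by
    intro p hp hd
    obtain ⟨q, hq, hpq⟩ := (hp.prime.dvd_finsetProd_iff _).1 hd
    rw [Finset.mem_filter, Nat.mem_primesLE] at hq
    have := (Nat.prime_dvd_prime_iff_eq hp hq.1.2).1 hpq
    subst this
    rw [nuA_prime_one p hp hq.2.1]
    have := hp.pos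
    positivity
  nu_lt_one_of_prime := by
    intro p hp hd
    obtain ⟨q, hq, hpq⟩ := (hp.prime.dvd_finsetProd_iff _).1 hd
    rw [Finset.mem_filter, Nat.mem_primesLE] at hq
    have := (Nat.prime_dvd_prime_iff_eq hp hq.1.2).1 hpq
    subst this
    rw [nuA_prime_one p hp hq.2.1]
    have h2 : 2 < p := by
      have := hp.two_le
      have := hq.2.1
      by_contra h
      have : p = 2 := by omega
      omega
    rw [div_lt_one (by exact_mod_cast hp.pos)]
    exact_mod_cast h2

theorem sieve_S (a N w : ℕ) (ha : 1 ≤ a) (hw : 2 ≤ w) :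
    ((((Finset.Icc 1 N).filter (fun n => a ∣ n ^ 2 + 1)).filter (fun n =>
      ∀ p ∈ Nat.primesLE w, p % 4 = 1 → ¬ p ∣ a → ¬ p ∣ n ^ 2 + 1)).card : ℝ) ≤
    12 * N * (rho a / a * ∏ p ∈ a.primeFactors, cc p) / Real.log w + rho a * (w : ℝ) ^ 6 := by
  classical
  set s := mySieve a N w with hs
  set T := (Nat.primesLE w).filter (fun p => p % 4 = 1 ∧ ¬ p ∣ a) with hT
  have hTp : ∀ p ∈ T, p.Prime := fun p hp => (Nat.mem_primesLE.1 (Finset.mem_filter.1 hp).1).2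
  have hP : s.prodPrimes = ∏ p ∈ T, p := rfl
  have hnus : s.nu = nuA := rfl
  have hinj : Function.Injective (fun n : ℕ => n ^ 2 + 1) := by
    intro m n h
    have h' : m ^ 2 = n ^ 2 := by simpa using h
    exact Nat.pow_left_injective (n := 2) (by norm_num) h'
  have hdT : ∀ p, p.Prime → p ∣ s.prodPrimes → p ∈ T := by
    intro p hp hd
    rw [hP] at hd
    obtain ⟨q, hq, hpq⟩ := (hp.prime.dvd_finsetProd_iff _).1 hd
    have := (Nat.prime_dvd_prime_iff_eq hp (hTp q hq)).1 hpq
    rwa [this]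
  have hcop : ∀ d, d ∣ s.prodPrimes → a.Coprime d := by
    intro d hd
    apply Nat.coprime_of_dvd
    intro p hp hpa hpd
    have := hdT p hp (hpd.trans hd)
    exact (Finset.mem_filter.1 this).2.2 hpa
  have hsift : s.siftedSum = ((((Finset.Icc 1 N).filter (fun n => a ∣ n ^ 2 + 1)).filter (fun n =>
      ∀ p ∈ Nat.primesLE w, p % 4 = 1 → ¬ p ∣ a → ¬ p ∣ n ^ 2 + 1)).card : ℝ) := by
    unfold BoundingSieve.siftedSum
    change ∑ d ∈ ((Finset.Icc 1 N).filter (fun n => a ∣ n ^ 2 + 1)).image (fun n => n ^ 2 + 1),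
      (if Nat.Coprime s.prodPrimes d then (1:ℝ) else 0) = _
    rw [Finset.sum_image (fun x _ y _ h => hinj h), ← Finset.sum_filter, Finset.sum_const,
      nsmul_eq_mul, mul_one]
    congr 2
    apply Finset.filter_congr
    intro n _
    constructor
    · intro h p hpw hp4 hpa hpn
      have hp := (Nat.mem_primesLE.1 hpw).2
      have : p ∈ T := Finset.mem_filter.2 ⟨hpw, hp4, hpa⟩
      exact Nat.not_coprime_of_dvd_of_dvd hp.one_lt (Finset.dvd_prod_of_mem _ this) hpn h
    · intro h
      apply Nat.coprime_of_dvd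
      intro p hp hpP hpn
      have := Finset.mem_filter.1 (hdT p hp hpP)
      exact h p this.1 this.2.1 this.2.2 hpn
  have hrem : ∀ d, d ∣ s.prodPrimes → |s.rem d| ≤ (rho a : ℝ) * d := by
    intro d hd
    have hd0 : 0 < d := Nat.pos_of_ne_zero (fun h => by
      subst h; exact s.prodPrimes_squarefree.ne_zero (zero_dvd_iff.1 hd))
    have hc := hcop d hd
    have h1 := rho_count (a * d) N (Nat.mul_pos ha hd0)
    have h2 : s.rem d = (((Finset.Icc 1 N).filter (fun n => a * d ∣ n ^ 2 + 1)).card : ℝ) -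
        N * (rho (a * d) / (a * d : ℕ) : ℝ) := by
      unfold BoundingSieve.rem BoundingSieve.multSum
      change (∑ n ∈ ((Finset.Icc 1 N).filter (fun n => a ∣ n ^ 2 + 1)).image (fun n => n ^ 2 + 1),
        if d ∣ n then (1:ℝ) else 0) - (rho d : ℝ) / d * (N * (rho a / a : ℝ)) = _
      rw [Finset.sum_image (fun x _ y _ h => hinj h), ← Finset.sum_filter, Finset.sum_const,
        nsmul_eq_mul, mul_one, Finset.filter_filter, rho_mul hc]
      congr 1
      · congr 2
        apply Finset.filter_congr
        intro n _
        constructor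
        · rintro ⟨h3, h4⟩; exact hc.mul_dvd_of_dvd_of_dvd h3 h4
        · intro h; exact ⟨(Dvd.intro _ rfl).trans h, (Dvd.intro_left _ rfl).trans h⟩
      · push_cast
        rw [mul_comm, mul_assoc, div_mul_div_comm]
    rw [h2]
    refine h1.trans ?_
    rw [rho_mul hc]
    push_cast
    apply mul_le_mul_of_nonneg_left _ (Nat.cast_nonneg _)
    exact_mod_cast rho_le_self d
  have hnu : ∀ d, d ∣ s.prodPrimes → (s.nu d)⁻¹ ≤ d := by
    intro d hd
    have h1 := BoundingSieve.nu_pos_of_dvd_prodPrimes hd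
    rw [hnus, nuA_apply] at h1 ⊢
    have h2 : (0:ℝ) < rho d := by
      rcases Nat.eq_zero_or_pos (rho d) with h | h
      · rw [h] at h1; simp at h1
      · exact_mod_cast h
    have h3 : (1:ℝ) ≤ rho d := by exact_mod_cast (by exact_mod_cast h2 : 0 < rho d)
    rw [inv_div]
    exact div_le_self (Nat.cast_nonneg _) h3
  have hmain := s.selberg_bound w (by omega) (rho a) (Nat.cast_nonneg _) hrem hnu
  rw [hsift] at hmain
  have hG : GT (fun p => (2 / (p : ℝ)) * (1 - 2 / (p : ℝ))⁻¹) T w ≤ s.SS w := by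
    unfold GT BoundingSieve.SS
    have hpf : ∀ t ⊆ T, (∏ p ∈ t, p).primeFactors = t := fun t ht =>
      Nat.primeFactors_prod fun p hp => hTp p (ht hp)
    have hdvd : ∀ t ⊆ T, (∏ p ∈ t, p) ∣ s.prodPrimes := fun t ht => by
      rw [hP]; exact Finset.prod_dvd_prod_of_subset _ _ _ ht
    have himg : (T.powerset.filter (fun t => ∏ p ∈ t, p ≤ w)).image (fun t => ∏ p ∈ t, p) ⊆
        s.prodPrimes.divisors.filter (fun l => l ≤ w) := by
      intro l hl
      obtain ⟨t, ht, rfl⟩ := Finset.mem_image.1 hl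
      rw [Finset.mem_filter, Finset.mem_powerset] at ht
      exact Finset.mem_filter.2 ⟨Nat.mem_divisors.2
        ⟨hdvd t ht.1, s.prodPrimes_squarefree.ne_zero⟩, ht.2⟩
    refine le_trans (le_of_eq ?_) (Finset.sum_le_sum_of_subset_of_nonneg himg ?_)
    · rw [Finset.sum_image]
      · apply Finset.sum_congr rfl
        intro t ht
        rw [Finset.mem_filter, Finset.mem_powerset] at ht
        rw [BoundingSieve.selbergTerms_apply, ← BoundingSieve.prod_primeFactors_nu (hdvd t ht.1),
          hpf t ht.1, ← Finset.prod_mul_distrib]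
        apply Finset.prod_congr rfl
        intro p hp
        rw [hnus, nuA_prime_one p (hTp p (ht.1 hp)) (Finset.mem_filter.1 (ht.1 hp)).2.1]
      · intro t ht t' ht' h
        have ht := Finset.mem_powerset.1 (Finset.mem_filter.1 (Finset.mem_coe.1 ht)).1
        have ht' := Finset.mem_powerset.1 (Finset.mem_filter.1 (Finset.mem_coe.1 ht')).1
        rw [← hpf t ht, ← hpf t' ht']
        exact congrArg Nat.primeFactors h
    · intro l hl _
      exact (BoundingSieve.selbergTerms_pos (Nat.dvd_of_mem_divisors (Finset.mem_filter.1 hl).1)).le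
  have hL := lemmaG w a (by omega) ha
  rw [← hT] at hL
  set K := ∏ p ∈ a.primeFactors, cc p with hK
  have hK1 : 0 < K := Finset.prod_pos fun p hp =>
    zero_lt_one.trans_le (one_le_cc (Nat.prime_of_mem_primeFactors hp))
  have hlog : 0 < Real.log w := Real.log_pos (by exact_mod_cast hw)
  have hSS := s.SS_pos w (by omega)
  have hinv : (s.SS w)⁻¹ ≤ 12 * K / Real.log w := by
    rw [inv_le_comm₀ hSS (by positivity), inv_div, div_le_iff₀ (by positivity)]
    have : 8 * K * GT (fun p => (2 / (p : ℝ)) * (1 - 2 / (p : ℝ))⁻¹) T w ≤ 8 * K * s.SS w :=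
      mul_le_mul_of_nonneg_left hG (by positivity)
    nlinarith
  have htm : s.totalMass = N * (rho a / a : ℝ) := rfl
  refine hmain.trans ?_
  rw [htm]
  have : N * (rho a / a : ℝ) * (s.SS w)⁻¹ ≤ N * (rho a / a : ℝ) * (12 * K / Real.log w) :=
    mul_le_mul_of_nonneg_left hinv (by positivity)
  calc _ ≤ _ := add_le_add_left this _
    _ = _ := by ring


theorem esym_le {α : Type*} [DecidableEq α] (F : α → ℝ) (hF : ∀ a, 0 ≤ F a) (Q : Finset α) :
    ∀ j : ℕ, (j.factorial : ℝ) * ∑ s ∈ Q.powersetCard j, ∏ q ∈ s, F q ≤ (∑ q ∈ Q, F q) ^ j := by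
  induction Q using Finset.induction_on with
  | empty =>
    intro j
    rcases Nat.eq_zero_or_pos j with rfl | hj
    · simp
    · rw [Finset.powersetCard_eq_empty.2 (by simpa using hj)]
      simp
  | insert a Q ha ih =>
    intro j
    rcases j with _ | j
    · simp
    · rw [Finset.powersetCard_succ_insert ha, Finset.sum_union, Finset.sum_image,
        Finset.sum_insert ha]
      · have e1 : ∑ s ∈ Q.powersetCard j, ∏ q ∈ insert a s, F q =
            F a * ∑ s ∈ Q.powersetCard j, ∏ q ∈ s, F q := by
          rw [Finset.mul_sum]
          apply Finset.sum_congr rfl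
          intro s hs
          rw [Finset.prod_insert (fun h => ha ((Finset.mem_powersetCard.1 hs).1 h))]
        rw [e1]
        have h1 := ih (j + 1)
        have h2 := ih j
        set S := ∑ q ∈ Q, F q with hS
        have hS0 : 0 ≤ S := Finset.sum_nonneg fun q _ => hF q
        have hb : S ^ (j + 1) + (j + 1 : ℝ) * F a * S ^ j ≤ (F a + S) ^ (j + 1) := by
          clear h1 h2 ih e1
          induction j with
          | zero => simp; linarith
          | succ j ihj =>
            have hFa := hF a
            calc _ ≤ (F a + S) * (S ^ (j + 1) + (j + 1 : ℝ) * F a * S ^ j) := by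
                  have : 0 ≤ (j + 1 : ℝ) * F a * S ^ j * F a := by positivity
                  push_cast
                  rw [← sub_nonneg]
                  refine le_of_le_of_eq this ?_
                  ring
              _ ≤ (F a + S) * (F a + S) ^ (j + 1) :=
                  mul_le_mul_of_nonneg_left ihj (by linarith)
              _ = _ := by ring
        refine le_trans ?_ hb
        rw [mul_add]
        apply add_le_add h1
        rw [Nat.factorial_succ]
        push_cast
        have := mul_le_mul_of_nonneg_left h2 (mul_nonneg (by positivity : (0:ℝ) ≤ j + 1) (hF a))
        linarith
      · intro s hs t ht hst
        have hs' := Finset.mem_powersetCard.1 (Finset.mem_coe.1 hs)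
        have ht' := Finset.mem_powersetCard.1 (Finset.mem_coe.1 ht)
        rw [← Finset.erase_insert (fun h => ha (hs'.1 h)), ← Finset.erase_insert (fun h => ha (ht'.1 h))]
        exact congrArg (fun u => u.erase a) hst
      · rw [Finset.disjoint_left]
        intro s hs hs2
        obtain ⟨t, _, rfl⟩ := Finset.mem_image.1 hs2
        exact ha ((Finset.mem_powersetCard.1 hs).1 (Finset.mem_insert_self _ _))

noncomputable def ff (a : ℕ) : ℝ := rho a / a * ∏ p ∈ a.primeFactors, cc p

theorem ff_nonneg (a : ℕ) : 0 ≤ ff a := by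
  unfold ff
  apply mul_nonneg (by positivity)
  exact Finset.prod_nonneg fun p hp =>
    zero_le_one.trans (one_le_cc (Nat.prime_of_mem_primeFactors hp))

noncomputable def FA (β : ℝ) : ArithmeticFunction ℝ := ⟨fun n => ff n * (n : ℝ) ^ β, by simp [ff]⟩

theorem FA_apply (β : ℝ) (n : ℕ) : FA β n = ff n * (n : ℝ) ^ β := rfl

theorem FA_nonneg (β : ℝ) (n : ℕ) : 0 ≤ FA β n := by
  rw [FA_apply]; exact mul_nonneg (ff_nonneg n) (by positivity)

theorem FA_mult (β : ℝ) : (FA β).IsMultiplicative := by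
  constructor
  · rw [FA_apply]; simp [ff, rho_one]
  · intro m n h
    rw [FA_apply, FA_apply, FA_apply]
    unfold ff
    rw [rho_mul h, h.primeFactors_mul, Finset.prod_union h.disjoint_primeFactors]
    push_cast
    rw [Real.mul_rpow (by positivity) (by positivity)]
    rw [mul_div_mul_comm]
    ring

theorem sum_FA_le (β : ℝ) (z V j : ℕ) (A : Finset ℕ)
    (hA : ∀ a ∈ A, a ≠ 0 ∧ (∀ p ∈ a.primeFactors, p ≤ z) ∧ a.primeFactors.card = j ∧ a ≤ V) :
    (j.factorial : ℝ) * ∑ a ∈ A, FA β a ≤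
      (∑ p ∈ Nat.primesLE z, ∑ v ∈ Finset.Icc 1 V, FA β (p ^ v)) ^ j := by
  classical
  have hs := esym_le (fun x : ℕ × ℕ => FA β (x.1 ^ x.2)) (fun x => FA_nonneg β _)
    (Nat.primesLE z ×ˢ Finset.Icc 1 V) j
  rw [Finset.sum_product] at hs
  refine le_trans ?_ hs
  apply mul_le_mul_of_nonneg_left _ (by positivity)
  let e : ℕ → Finset (ℕ × ℕ) := fun a => a.primeFactors.image (fun p => (p, a.factorization p))
  have hinjp : ∀ a : ℕ, Function.Injective (fun p : ℕ => (p, a.factorization p)) := by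
    intro a p q h
    exact congrArg Prod.fst h
  have hprod : ∀ a ∈ A, ∏ x ∈ e a, x.1 ^ x.2 = a := by
    intro a ha
    rw [Finset.prod_image (fun x _ y _ h => hinjp a h)]
    exact Nat.prod_factorization_pow_eq_self (hA a ha).1
  have himg : A.image e ⊆ (Nat.primesLE z ×ˢ Finset.Icc 1 V).powersetCard j := by
    intro s hs
    obtain ⟨a, ha, rfl⟩ := Finset.mem_image.1 hs
    obtain ⟨h0, h1, h2, h3⟩ := hA a ha
    rw [Finset.mem_powersetCard]
    refine ⟨?_, ?_⟩
    · intro x hx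
      obtain ⟨p, hp, rfl⟩ := Finset.mem_image.1 hx
      have hpp := Nat.prime_of_mem_primeFactors hp
      rw [Finset.mem_product, Nat.mem_primesLE, Finset.mem_Icc]
      refine ⟨⟨h1 p hp, hpp⟩, ?_, ?_⟩
      · exact hpp.factorization_pos_of_dvd h0 (Nat.dvd_of_mem_primeFactors hp)
      · exact (Nat.factorization_lt p h0).le.trans h3
    · rw [Finset.card_image_of_injective _ (hinjp a), h2]
  refine le_trans (le_of_eq ?_) (Finset.sum_le_sum_of_subset_of_nonneg himg ?_)
  · rw [Finset.sum_image]
    · apply Finset.sum_congr rfl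
      intro a ha
      rw [Finset.prod_image (fun x _ y _ h => hinjp a h),
        (FA_mult β).multiplicative_factorization _ (hA a ha).1]
      rfl
    · intro a ha b hb hab
      rw [← hprod a ha, ← hprod b hb, hab]
  · intro s _ _
    exact Finset.prod_nonneg fun x _ => FA_nonneg β _

theorem cc_le {p : ℕ} (hp : p.Prime) : cc p ≤ 1 + 6 / p ∧ cc p ≤ 4 := by
  have h2 : (2 : ℝ) ≤ p := by exact_mod_cast hp.two_le
  have h1 : (p : ℝ)⁻¹ ≤ 1 / 2 := by
    rw [← one_div]; exact one_div_le_one_div_of_le (by norm_num) h2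
  have h0 : 0 < (p : ℝ)⁻¹ := by positivity
  set t := (p : ℝ)⁻¹ with ht
  have hq : 0 < (1 - t) ^ 2 := by
    have : 0 < 1 - t := by linarith
    positivity
  have e : (6 : ℝ) / p = 6 * t := by rw [ht, div_eq_mul_inv]
  unfold cc
  rw [← ht, e]
  constructor
  · rw [inv_le_iff_one_le_mul₀ hq]
    nlinarith [mul_nonneg h0.le (mul_nonneg (by linarith : 0 ≤ 1/2 - t) (by linarith : 0 ≤ 4/3 - t))]
  · rw [inv_le_iff_one_le_mul₀ hq]
    nlinarith

theorem ff_prime_pow {p : ℕ} (hp : p.Prime) (v : ℕ) (hv : 1 ≤ v) :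
    ff (p ^ v) = rho (p ^ v) / (p : ℝ) ^ v * cc p := by
  unfold ff
  rw [Nat.primeFactors_prime_pow (by omega) hp, Finset.prod_singleton]
  push_cast; rfl

theorem FA_pow_le {p : ℕ} (hp : p.Prime) (β : ℝ) (hβ1 : β ≤ 1 / 4) (v : ℕ) (hv : 1 ≤ v) :
    FA β (p ^ v) ≤ 8 * ((p : ℝ) ^ (-(3 / 4) : ℝ)) ^ v := by
  have hp0 : (0 : ℝ) < p := by exact_mod_cast hp.pos
  have hp1 : (1 : ℝ) ≤ p := by exact_mod_cast hp.one_lt.le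
  rw [FA_apply, ff_prime_pow hp v hv]
  have hr : (rho (p ^ v) : ℝ) ≤ 2 := by exact_mod_cast rho_prime_pow_le p v hp
  have hb : (((p ^ v : ℕ) : ℝ)) ^ β ≤ ((p : ℝ) ^ (1 / 4 : ℝ)) ^ v := by
    push_cast
    rw [← Real.rpow_natCast, ← Real.rpow_natCast, ← Real.rpow_mul hp0.le, ← Real.rpow_mul hp0.le]
    apply Real.rpow_le_rpow_of_exponent_le hp1
    nlinarith [(Nat.cast_nonneg v : (0:ℝ) ≤ v)]
  have e : ((p : ℝ) ^ (-(3 / 4) : ℝ)) ^ v = ((p : ℝ) ^ v)⁻¹ * ((p : ℝ) ^ (1 / 4 : ℝ)) ^ v := by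
    rw [← inv_pow, ← mul_pow]
    congr 1
    rw [← Real.rpow_neg_one, ← Real.rpow_add hp0]
    norm_num
  rw [e]
  have hcc := (cc_le hp).2
  have hcc0 := one_le_cc hp
  calc _ ≤ (2 / (p : ℝ) ^ v * 4) * ((p : ℝ) ^ (1 / 4 : ℝ)) ^ v := by
        apply mul_le_mul _ hb (by positivity) (by positivity)
        apply mul_le_mul _ hcc (by linarith) (by positivity)
        exact div_le_div_of_nonneg_right hr (by positivity)
    _ = _ := by ring

theorem local_le {p : ℕ} (hp : p.Prime) (β M : ℝ) (hβ0 : 0 ≤ β) (hβ1 : β ≤ 1 / 4)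
    (hM : β * Real.log p ≤ M) (V : ℕ) :
    ∑ v ∈ Finset.Icc 1 V, FA β (p ^ v) ≤
      (1 + chi p) / p + 2 * Real.exp M * β * (Real.log p / p) + 36 * (p : ℝ) ^ (-(3 / 2) : ℝ) := by
  have hp0 : (0 : ℝ) < p := by exact_mod_cast hp.pos
  have hp1 : (1 : ℝ) ≤ p := by exact_mod_cast hp.one_lt.le
  have hp2 : (2 : ℝ) ≤ p := by exact_mod_cast hp.two_le
  have hlog : 0 ≤ Real.log p := Real.log_nonneg hp1
  set q := (p : ℝ) ^ (-(3 / 4) : ℝ) with hq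
  have hq0 : 0 < q := by positivity
  have hq2 : q ≤ 2 / 3 := by
    calc q ≤ (2 : ℝ) ^ (-(3 / 4) : ℝ) :=
          Real.rpow_le_rpow_of_nonpos (by norm_num) hp2 (by norm_num)
      _ ≤ 2 / 3 := by
          rw [Real.rpow_neg (by norm_num), inv_le_comm₀ (by positivity) (by norm_num)]
          have : ((2 / 3 : ℝ)⁻¹) = ((3 / 2 : ℝ) ^ (4 : ℝ)) ^ (1 / 4 : ℝ) := by
            rw [← Real.rpow_mul (by norm_num)]; norm_num
          rw [this]
          have : (2 : ℝ) ^ (3 / 4 : ℝ) = ((2 : ℝ) ^ (3 : ℝ)) ^ (1 / 4 : ℝ) := by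
            rw [← Real.rpow_mul (by norm_num)]; norm_num
          rw [this]
          apply Real.rpow_le_rpow (by positivity) _ (by norm_num)
          norm_num
  have hqq : q ^ 2 = (p : ℝ) ^ (-(3 / 2) : ℝ) := by
    rw [hq, ← Real.rpow_natCast, ← Real.rpow_mul hp0.le]; norm_num
  -- the first term
  have hone : FA β p ≤ (1 + chi p) / p + 2 * Real.exp M * β * (Real.log p / p) +
      12 * (p : ℝ) ^ (-(3 / 2) : ℝ) := by
    have e1 := ff_prime_pow hp 1 le_rfl
    rw [pow_one, pow_one] at e1
    rw [FA_apply, e1, rho_prime p hp]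
    have hc2 : 1 + chi p ≤ 2 := by have := (abs_le.1 (chi_abs_le p)).2; linarith
    have hc0 : 0 ≤ 1 + chi p := by have := (abs_le.1 (chi_abs_le p)).1; linarith
    have hpb : (p : ℝ) ^ β ≤ 1 + Real.exp M * (β * Real.log p) := by
      rw [Real.rpow_def_of_pos hp0, mul_comm (Real.log p)]
      set u := β * Real.log p with hu
      have hu0 : 0 ≤ u := mul_nonneg hβ0 hlog
      have h1 := Real.add_one_le_exp (-u)
      have h2 : Real.exp u * (1 - u) ≤ 1 := by
        calc _ ≤ Real.exp u * Real.exp (-u) :=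
              mul_le_mul_of_nonneg_left (by linarith) (Real.exp_pos _).le
          _ = 1 := by rw [← Real.exp_add]; simp
      have h3 : Real.exp u ≤ Real.exp M := Real.exp_le_exp.2 hM
      have h4 : Real.exp u * u ≤ Real.exp M * u := mul_le_mul_of_nonneg_right h3 hu0
      linarith
    have hpb4 : (p : ℝ) ^ β ≤ (p : ℝ) ^ (1 / 2 : ℝ) :=
      Real.rpow_le_rpow_of_exponent_le hp1 (by linarith)
    have hb0 : 0 < (p : ℝ) ^ β := by positivity
    have hcc := (cc_le hp).1
    have e3 : (p : ℝ) ^ (-(3 / 2) : ℝ) = 1 / p * (1 / p) * (p : ℝ) ^ (1 / 2 : ℝ) := by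
      rw [one_div, ← Real.rpow_neg_one, ← Real.rpow_add hp0, ← Real.rpow_add hp0]; norm_num
    calc (1 + chi p) / p * cc p * (p : ℝ) ^ β
        ≤ (1 + chi p) / p * (1 + 6 / p) * (p : ℝ) ^ β := by gcongr
      _ = (1 + chi p) / p * (p : ℝ) ^ β + (1 + chi p) * (6 / p / p) * (p : ℝ) ^ β := by ring
      _ ≤ (1 + chi p) / p * (1 + Real.exp M * (β * Real.log p)) +
            2 * (6 / p / p) * (p : ℝ) ^ (1 / 2 : ℝ) := by gcongr
      _ = (1 + chi p) / p + (1 + chi p) * (Real.exp M * β * (Real.log p / p)) +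
            2 * (6 / p / p) * (p : ℝ) ^ (1 / 2 : ℝ) := by ring
      _ ≤ (1 + chi p) / p + 2 * (Real.exp M * β * (Real.log p / p)) +
            2 * (6 / p / p) * (p : ℝ) ^ (1 / 2 : ℝ) := by gcongr
      _ = _ := by rw [e3]; ring
  have htail : ∀ W : ℕ, ∑ v ∈ Finset.range W, FA β (p ^ (v + 2)) ≤ 24 * q ^ 2 := by
    intro W
    calc _ ≤ ∑ v ∈ Finset.range W, 8 * q ^ (v + 2) :=
          Finset.sum_le_sum fun v _ => FA_pow_le hp β hβ1 (v + 2) (by omega)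
      _ = 8 * q ^ 2 * ∑ v ∈ Finset.range W, q ^ v := by
          rw [Finset.mul_sum]; apply Finset.sum_congr rfl; intros; ring
      _ ≤ 8 * q ^ 2 * 3 := by
          apply mul_le_mul_of_nonneg_left _ (by positivity)
          have : ∑ v ∈ Finset.range W, q ^ v ≤ (1 - q)⁻¹ := by
            have hs := tsum_geometric_of_lt_one hq0.le (by linarith : q < 1)
            rw [← hs]
            exact (summable_geometric_of_lt_one hq0.le (by linarith)).sum_le_tsum _
              (fun i _ => by positivity)
          refine this.trans ?_
          rw [inv_le_iff_one_le_mul₀ (by linarith)]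
          linarith
      _ = _ := by ring
  rw [hqq] at htail
  have h32 : 0 < (p : ℝ) ^ (-(3 / 2) : ℝ) := by positivity
  rcases V with _ | V
  · have hc0 : 0 ≤ 1 + chi p := by have := (abs_le.1 (chi_abs_le p)).1; linarith
    simp only [Finset.Icc_eq_empty_of_lt (zero_lt_one), Finset.sum_empty]
    positivity
  · have e : Finset.Icc 1 (V + 1) = (Finset.range (V + 1)).image (fun v => v + 1) := by
      ext v; simp only [Finset.mem_Icc, Finset.mem_image, Finset.mem_range]
      constructor
      · intro h; exact ⟨v - 1, by omega, by omega⟩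
      · rintro ⟨u, hu, rfl⟩; omega
    rw [e, Finset.sum_image (fun x _ y _ h => by simpa using h), Finset.sum_range_succ']
    have h1 := htail V
    simp only [zero_add, pow_one]
    linarith

theorem sum_local_le (M : ℝ) : ∃ C : ℝ, 0 ≤ C ∧ ∀ (z V : ℕ) (β : ℝ), 2 ≤ z → 0 ≤ β →
    β ≤ 1 / 4 → β * Real.log z ≤ M →
    ∑ p ∈ Nat.primesLE z, ∑ v ∈ Finset.Icc 1 V, FA β (p ^ v) ≤
      Real.log (Real.log z) + C := by
  obtain ⟨C1, hC1⟩ := sum_rho_div_le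
  have hsum : Summable (fun n : ℕ => (n : ℝ) ^ (-(3 / 2) : ℝ)) := by
    rw [Real.summable_nat_rpow]; norm_num
  set C2 := ∑' n : ℕ, (n : ℝ) ^ (-(3 / 2) : ℝ) with hC2
  refine ⟨|C1 + 2 * Real.exp M * (M + Real.log 4) + 36 * C2|, abs_nonneg _, ?_⟩
  intro z V β hz hβ0 hβ1 hM
  have h1 : ∑ p ∈ Nat.primesLE z, ∑ v ∈ Finset.Icc 1 V, FA β (p ^ v) ≤
      ∑ p ∈ Nat.primesLE z, ((1 + chi p) / p + 2 * Real.exp M * β * (Real.log p / p) +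
        36 * (p : ℝ) ^ (-(3 / 2) : ℝ)) := by
    apply Finset.sum_le_sum
    intro p hp
    rw [Nat.mem_primesLE] at hp
    apply local_le hp.2 β M hβ0 hβ1
    refine le_trans ?_ hM
    apply mul_le_mul_of_nonneg_left _ hβ0
    exact Real.log_le_log (by exact_mod_cast hp.2.pos) (by exact_mod_cast hp.1)
  rw [Finset.sum_add_distrib, Finset.sum_add_distrib, ← Finset.mul_sum, ← Finset.mul_sum] at h1
  have h2 := hC1 z hz
  have h3 := sum_log_div_le z (by omega)
  have h4 : ∑ p ∈ Nat.primesLE z, (p : ℝ) ^ (-(3 / 2) : ℝ) ≤ C2 :=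
    hsum.sum_le_tsum _ (fun i _ => by positivity)
  have hl4 : 0 ≤ Real.log 4 := Real.log_nonneg (by norm_num)
  have h5 : 2 * Real.exp M * β * ∑ p ∈ Nat.primesLE z, Real.log p / p ≤
      2 * Real.exp M * (M + Real.log 4) := by
    calc _ ≤ 2 * Real.exp M * β * (Real.log z + Real.log 4) :=
          mul_le_mul_of_nonneg_left h3 (by positivity)
      _ = 2 * Real.exp M * (β * Real.log z + β * Real.log 4) := by ring
      _ ≤ _ := by
          apply mul_le_mul_of_nonneg_left _ (by positivity)
          nlinarith
  have h6 := le_abs_self (C1 + 2 * Real.exp M * (M + Real.log 4) + 36 * C2)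
  linarith

theorem sum_ff_le (M : ℝ) : ∃ C : ℝ, 0 ≤ C ∧ ∀ (z : ℕ) (β : ℝ), 2 ≤ z → 0 ≤ β →
    β ≤ 1 / 4 → β * Real.log z ≤ M → 0 ≤ Real.log (Real.log z) + C ∧
    ∀ (j : ℕ) (A : Finset ℕ),
    (∀ a ∈ A, a ≠ 0 ∧ (∀ p ∈ a.primeFactors, p ≤ z) ∧ a.primeFactors.card = j) →
    ∑ a ∈ A, ff a * (a : ℝ) ^ β ≤ (Real.log (Real.log z) + C) ^ j / (j.factorial : ℝ) := by
  obtain ⟨C, hC0, hC⟩ := sum_local_le M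
  refine ⟨C, hC0, ?_⟩
  intro z β hz hβ0 hβ1 hM
  have hpos : ∀ V, 0 ≤ ∑ p ∈ Nat.primesLE z, ∑ v ∈ Finset.Icc 1 V, FA β (p ^ v) := fun V =>
    Finset.sum_nonneg fun p _ => Finset.sum_nonneg fun v _ => FA_nonneg β _
  refine ⟨(hpos 0).trans (hC z 0 β hz hβ0 hβ1 hM), ?_⟩
  intro j A hA
  have h1 := sum_FA_le β z (∑ a ∈ A, a) j A (fun a ha => ⟨(hA a ha).1, (hA a ha).2.1, (hA a ha).2.2,
    Finset.single_le_sum (f := fun a => a) (fun _ _ => Nat.zero_le _) ha⟩)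
  rw [le_div_iff₀ (by positivity), mul_comm]
  refine h1.trans ?_
  exact pow_le_pow_left₀ (hpos _) (hC z _ β hz hβ0 hβ1 hM) j


theorem pow_fact_step (R U : ℝ) (hR : 1 ≤ R) (hU : 0 ≤ U) (k : ℕ) (hk : (k : ℝ) ≤ R * U) :
    ∀ i j : ℕ, j + i < k → U ^ j / (j.factorial : ℝ) ≤ R ^ i * (U ^ (j + i) / ((j + i).factorial : ℝ)) := by
  intro i
  induction i with
  | zero => intro j _; simp
  | succ i ih =>
    intro j hj
    refine (ih j (by omega)).trans ?_
    rw [pow_succ, mul_assoc]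
    apply mul_le_mul_of_nonneg_left _ (by positivity)
    rw [← add_assoc, Nat.factorial_succ]
    push_cast
    have h1 : ((j + i + 1 : ℕ) : ℝ) ≤ k := by exact_mod_cast hj.le
    push_cast at h1
    have h2 : (0 : ℝ) < (j : ℝ) + i + 1 := by positivity
    rw [div_le_iff₀ (by positivity)]
    have h3 : R * (U ^ (j + i + 1) / (((j : ℝ) + i + 1) * ((j + i).factorial : ℝ))) * ((j + i).factorial : ℝ)
        = R * U / ((j : ℝ) + i + 1) * U ^ (j + i) := by
      have : ((j + i).factorial : ℝ) ≠ 0 := by positivity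
      field_simp
      ring
    rw [h3]
    apply le_mul_of_one_le_left (by positivity)
    rw [one_le_div h2]
    linarith

theorem gen_T (N w z D J k : ℕ) (R U W Y β : ℝ) (hw : 2 ≤ w) (hR : 1 ≤ R) (hW : 0 ≤ W)
    (hWU : W ≤ U) (hkU : (k : ℝ) ≤ R * U) (hY : 0 < Y) (hβ : 0 ≤ β)
    (hJ : 2 * N ^ 2 < w ^ (J + 1))
    (hA : ∀ (j : ℕ) (A : Finset ℕ),
      (∀ a ∈ A, a ≠ 0 ∧ (∀ p ∈ a.primeFactors, p ≤ z) ∧ a.primeFactors.card = j) →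
      ∑ a ∈ A, ff a * (a : ℝ) ^ β ≤ W ^ j / (j.factorial : ℝ))
    (T : Finset ℕ) (hT : ∀ n ∈ T, 1 ≤ n ∧ n ≤ N ∧ D ≤ n ∧ (n ^ 2 + 1).primeFactors.card = k ∧
      ∃ a b : ℕ, a * b = n ^ 2 + 1 ∧ a.Coprime b ∧ (∀ p ∈ a.primeFactors, p ≤ z) ∧
        (∀ p ∈ b.primeFactors, w < p) ∧ Y ≤ a ∧ a ≤ D) :
    (T.card : ℝ) ≤ 12 * N / Real.log w * (Y ^ (-β) * ((2 * R) ^ J *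
      (U ^ (k - 1) / ((k - 1).factorial : ℝ)))) + (w : ℝ) ^ 6 * (D : ℝ) ^ 2 := by
  classical
  set Aa := (Finset.Icc 1 D).filter (fun a : ℕ => Y ≤ (a : ℝ) ∧ (∀ p ∈ a.primeFactors, p ≤ z) ∧
    a.primeFactors.card < k ∧ k ≤ a.primeFactors.card + J) with hAa
  let S : ℕ → Finset ℕ := fun a => ((Finset.Icc 1 N).filter (fun n => a ∣ n ^ 2 + 1)).filter (fun n =>
      ∀ p ∈ Nat.primesLE w, p % 4 = 1 → ¬ p ∣ a → ¬ p ∣ n ^ 2 + 1)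
  have hsub : T ⊆ Aa.biUnion S := by
    intro n hn
    obtain ⟨h1, h2, h3, h4, a, b, hab, hc, ha, hb, hYa, haD⟩ := hT n hn
    have hab0 : a * b ≠ 0 := by rw [hab]; positivity
    have ha0 : a ≠ 0 := left_ne_zero_of_mul hab0
    have hb0 : b ≠ 0 := right_ne_zero_of_mul hab0
    have hcard : a.primeFactors.card + b.primeFactors.card = k := by
      rw [← h4, ← hab, hc.primeFactors_mul, Finset.card_union_of_disjoint hc.disjoint_primeFactors]
    have hb1 : b ≠ 1 := by
      rintro rfl
      nlinarith
    have hbc : 0 < b.primeFactors.card := by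
      rw [Finset.card_pos, Nat.nonempty_primeFactors]; omega
    have hbJ : b.primeFactors.card ≤ J := by
      have e1 : w ^ b.primeFactors.card ≤ b := by
        calc w ^ b.primeFactors.card = ∏ p ∈ b.primeFactors, w := by simp
          _ ≤ ∏ p ∈ b.primeFactors, p := Finset.prod_le_prod' fun p hp => (hb p hp).le
          _ ≤ b := Nat.le_of_dvd (Nat.pos_of_ne_zero hb0) (Nat.prod_primeFactors_dvd b)
      have e2 : b ≤ n ^ 2 + 1 := by
        rw [← hab]; exact Nat.le_mul_of_pos_left b (Nat.pos_of_ne_zero ha0)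
      have e3 : w ^ b.primeFactors.card < w ^ (J + 1) := by nlinarith
      have := (Nat.pow_lt_pow_iff_right (by omega : 1 < w)).1 e3
      omega
    rw [Finset.mem_biUnion]
    refine ⟨a, ?_, ?_⟩
    · rw [hAa, Finset.mem_filter, Finset.mem_Icc]
      exact ⟨⟨Nat.pos_of_ne_zero ha0, haD⟩, hYa, ha, by omega, by omega⟩
    · simp only [S, Finset.mem_filter, Finset.mem_Icc]
      refine ⟨⟨⟨h1, h2⟩, ⟨b, hab.symm⟩⟩, ?_⟩
      intro p hp _ hpa hpn
      rw [Nat.mem_primesLE] at hp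
      rw [← hab, hp.2.dvd_mul] at hpn
      have hpb := hpn.resolve_left hpa
      have := hb p (Nat.mem_primeFactors.2 ⟨hp.2, hpb, hb0⟩)
      omega
  have hcard : (T.card : ℝ) ≤ ∑ a ∈ Aa, ((S a).card : ℝ) := by
    have : T.card ≤ ∑ a ∈ Aa, (S a).card :=
      (Finset.card_le_card hsub).trans Finset.card_biUnion_le
    exact_mod_cast this
  have hlog : 0 < Real.log w := Real.log_pos (by exact_mod_cast hw)
  set Λ := U ^ (k - 1) / ((k - 1).factorial : ℝ) with hΛ
  have hU : 0 ≤ U := hW.trans hWU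
  have hΛ0 : 0 ≤ Λ := by positivity
  have h1 : ∑ a ∈ Aa, ((S a).card : ℝ) ≤
      ∑ a ∈ Aa, (12 * N / Real.log w * ff a + (w : ℝ) ^ 6 * D) := by
    apply Finset.sum_le_sum
    intro a ha
    have ha' := Finset.mem_Icc.1 (Finset.mem_filter.1 ha).1
    refine (sieve_S a N w ha'.1 hw).trans ?_
    apply add_le_add
    · unfold ff; apply le_of_eq; ring
    · rw [mul_comm]
      apply mul_le_mul_of_nonneg_left _ (by positivity)
      exact_mod_cast (rho_le_self a).trans ha'.2
  rw [Finset.sum_add_distrib, ← Finset.mul_sum, Finset.sum_const, nsmul_eq_mul] at h1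
  have h2 : (Aa.card : ℝ) ≤ D := by
    have : Aa.card ≤ D := (Finset.card_filter_le _ _).trans (by simp)
    exact_mod_cast this
  have h3 : ∑ a ∈ Aa, ff a ≤ Y ^ (-β) * ∑ a ∈ Aa, ff a * (a : ℝ) ^ β := by
    rw [Finset.mul_sum]
    apply Finset.sum_le_sum
    intro a ha
    have hYa := (Finset.mem_filter.1 ha).2.1
    have e : 1 ≤ Y ^ (-β) * (a : ℝ) ^ β := by
      rw [Real.rpow_neg hY.le, ← div_eq_inv_mul, one_le_div (by positivity)]
      exact Real.rpow_le_rpow hY.le hYa hβ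
    calc ff a ≤ ff a * (Y ^ (-β) * (a : ℝ) ^ β) := le_mul_of_one_le_right (ff_nonneg a) e
      _ = _ := by ring
  have h4 : ∑ a ∈ Aa, ff a * (a : ℝ) ^ β ≤ (2 * R) ^ J * Λ := by
    have hmap : ∀ a ∈ Aa, a.primeFactors.card ∈ Finset.Ico (k - J) k := by
      intro a ha
      have := (Finset.mem_filter.1 ha).2
      rw [Finset.mem_Ico]; omega
    rw [← Finset.sum_fiberwise_of_maps_to hmap]
    calc _ ≤ ∑ j ∈ Finset.Ico (k - J) k, R ^ J * Λ := by
          apply Finset.sum_le_sum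
          intro j hj
          rw [Finset.mem_Ico] at hj
          have hb := hA j (Aa.filter (fun a => a.primeFactors.card = j)) (by
            intro a ha
            rw [Finset.mem_filter] at ha
            have ha2 := Finset.mem_filter.1 ha.1
            exact ⟨by have := (Finset.mem_Icc.1 ha2.1).1; omega, ha2.2.2.1, ha.2⟩)
          refine hb.trans ?_
          have e1 : W ^ j / (j.factorial : ℝ) ≤ U ^ j / (j.factorial : ℝ) := by gcongr
          have e2 := pow_fact_step R U hR hU k hkU (k - 1 - j) j (by omega)
          rw [show j + (k - 1 - j) = k - 1 by omega] at e2
          refine e1.trans (e2.trans ?_)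
          apply mul_le_mul_of_nonneg_right _ hΛ0
          exact pow_le_pow_right₀ hR (by omega)
      _ = ((k - (k - J) : ℕ) : ℝ) * (R ^ J * Λ) := by
          rw [Finset.sum_const, Nat.card_Ico, nsmul_eq_mul]
      _ ≤ 2 ^ J * (R ^ J * Λ) := by
          apply mul_le_mul_of_nonneg_right _ (by positivity)
          have : k - (k - J) ≤ 2 ^ J := by
            have := (Nat.lt_two_pow_self (n := J)).le
            omega
          exact_mod_cast this
      _ = _ := by rw [mul_pow]; ring
  have h5 : ∑ a ∈ Aa, ff a ≤ Y ^ (-β) * ((2 * R) ^ J * Λ) :=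
    h3.trans (mul_le_mul_of_nonneg_left h4 (by positivity))
  calc (T.card : ℝ) ≤ _ := hcard
    _ ≤ _ := h1
    _ ≤ 12 * N / Real.log w * (Y ^ (-β) * ((2 * R) ^ J * Λ)) + D * ((w : ℝ) ^ 6 * D) := by
        apply add_le_add
        · exact mul_le_mul_of_nonneg_left h5 (by positivity)
        · exact mul_le_mul_of_nonneg_right h2 (by positivity)
    _ = _ := by ring

/-- Exceptional set: a large prime power of a small prime divides `n^2+1`. -/
theorem exc_count (N Z : ℕ) (V : ℝ) (hV : 0 < V) (T : Finset ℕ)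
    (hT : ∀ n ∈ T, 1 ≤ n ∧ n ≤ N ∧ ∃ p v : ℕ, p.Prime ∧ p ≤ Z ∧ p ^ v ∣ n ^ 2 + 1 ∧ V < ((p ^ v : ℕ) : ℝ)) :
    (T.card : ℝ) ≤ Z * (2 * N / V + 2) := by
  classical
  have hex : ∀ p : ℕ, p.Prime → ∃ v, V < ((p ^ v : ℕ) : ℝ) := by
    intro p hp
    obtain ⟨v, hv⟩ := pow_unbounded_of_one_lt V (by exact_mod_cast hp.one_lt : (1:ℝ) < p)
    exact ⟨v, by exact_mod_cast hv⟩
  let v0 : ℕ → ℕ := fun p => if h : p.Prime then Nat.find (hex p h) else 0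
  let S : ℕ → Finset ℕ := fun p => (Finset.Icc 1 N).filter (fun n => p ^ v0 p ∣ n ^ 2 + 1)
  have hsub : T ⊆ (Nat.primesLE Z).biUnion S := by
    intro n hn
    obtain ⟨h1, h2, p, v, hp, hpZ, hd, hVp⟩ := hT n hn
    rw [Finset.mem_biUnion]
    refine ⟨p, Nat.mem_primesLE.2 ⟨hpZ, hp⟩, ?_⟩
    simp only [S, Finset.mem_filter, Finset.mem_Icc]
    refine ⟨⟨h1, h2⟩, (pow_dvd_pow p ?_).trans hd⟩
    simp only [v0, dif_pos hp]
    exact Nat.find_min' (hex p hp) hVp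
  have hS : ∀ p ∈ Nat.primesLE Z, ((S p).card : ℝ) ≤ 2 * N / V + 2 := by
    intro p hp
    have hpp := (Nat.mem_primesLE.1 hp).2
    have h1 := rho_count (p ^ v0 p) N (pow_pos hpp.pos _)
    have h2 : (rho (p ^ v0 p) : ℝ) ≤ 2 := by exact_mod_cast rho_prime_pow_le p (v0 p) hpp
    have h3 : V < ((p ^ v0 p : ℕ) : ℝ) := by
      simp only [v0, dif_pos hpp]
      exact Nat.find_spec (hex p hpp)
    have h4 := (abs_le.1 h1).2
    have h5 : (N : ℝ) * (rho (p ^ v0 p) / (p ^ v0 p : ℕ) : ℝ) ≤ 2 * N / V := by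
      rw [mul_comm 2, mul_div_assoc]
      apply mul_le_mul_of_nonneg_left _ (Nat.cast_nonneg _)
      exact div_le_div₀ (by norm_num) h2 hV h3.le
    simp only [S]
    linarith
  have h1 : (T.card : ℝ) ≤ ∑ p ∈ Nat.primesLE Z, ((S p).card : ℝ) := by
    have : T.card ≤ ∑ p ∈ Nat.primesLE Z, (S p).card :=
      (Finset.card_le_card hsub).trans Finset.card_biUnion_le
    exact_mod_cast this
  refine h1.trans ((Finset.sum_le_sum hS).trans ?_)
  rw [Finset.sum_const, nsmul_eq_mul]
  apply mul_le_mul_of_nonneg_right _ (by positivity)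
  have : (Nat.primesLE Z).card ≤ Z := by
    calc (Nat.primesLE Z).card ≤ (Finset.Icc 1 Z).card := by
          apply Finset.card_le_card
          intro p hp
          rw [Nat.mem_primesLE] at hp
          exact Finset.mem_Icc.2 ⟨hp.2.pos, hp.1⟩
      _ = Z := by simp
  exact_mod_cast this

/-- smooth part -/
noncomputable def sm (m y : ℕ) : ℕ := ∏ q ∈ m.primeFactors.filter (fun q => q ≤ y), q ^ m.factorization q
noncomputable def ro (m y : ℕ) : ℕ := ∏ q ∈ m.primeFactors.filter (fun q => ¬ q ≤ y), q ^ m.factorization q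

theorem sm_mul_ro (m y : ℕ) (hm : m ≠ 0) : sm m y * ro m y = m := by
  unfold sm ro
  rw [Finset.prod_filter_mul_prod_filter_not]
  exact Nat.prod_factorization_pow_eq_self hm

theorem sm_pf (m y p : ℕ) (hp : p ∈ (sm m y).primeFactors) : p ≤ y := by
  have hpp := Nat.prime_of_mem_primeFactors hp
  obtain ⟨q, hq, hpq⟩ := (hpp.prime.dvd_finsetProd_iff _).1 (Nat.dvd_of_mem_primeFactors hp)
  rw [Finset.mem_filter] at hq
  have := (Nat.prime_dvd_prime_iff_eq hpp (Nat.prime_of_mem_primeFactors hq.1)).1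
    (hpp.dvd_of_dvd_pow hpq)
  rw [this]; exact hq.2

theorem ro_pf (m y p : ℕ) (hp : p ∈ (ro m y).primeFactors) : y < p := by
  have hpp := Nat.prime_of_mem_primeFactors hp
  obtain ⟨q, hq, hpq⟩ := (hpp.prime.dvd_finsetProd_iff _).1 (Nat.dvd_of_mem_primeFactors hp)
  rw [Finset.mem_filter] at hq
  have := (Nat.prime_dvd_prime_iff_eq hpp (Nat.prime_of_mem_primeFactors hq.1)).1
    (hpp.dvd_of_dvd_pow hpq)
  rw [this]; have := hq.2; omega

theorem sm_coprime (m y : ℕ) (hm : m ≠ 0) : (sm m y).Coprime (ro m y) := by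
  have h := sm_mul_ro m y hm
  have h0 : sm m y * ro m y ≠ 0 := by rw [h]; exact hm
  apply Nat.coprime_of_dvd
  intro p hp h1 h2
  have a1 := sm_pf m y p (Nat.mem_primeFactors.2 ⟨hp, h1, left_ne_zero_of_mul h0⟩)
  have a2 := ro_pf m y p (Nat.mem_primeFactors.2 ⟨hp, h2, right_ne_zero_of_mul h0⟩)
  omega

theorem sm_zero (m : ℕ) : sm m 0 = 1 := by
  unfold sm
  rw [Finset.filter_false_of_mem]
  · simp
  · intro p hp
    have := (Nat.prime_of_mem_primeFactors hp).pos
    omega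

theorem sm_succ (m y : ℕ) : sm m (y + 1) =
    if y + 1 ∈ m.primeFactors then (y + 1) ^ m.factorization (y + 1) * sm m y else sm m y := by
  unfold sm
  split_ifs with h
  · have e : m.primeFactors.filter (fun q => q ≤ y + 1) =
        insert (y + 1) (m.primeFactors.filter (fun q => q ≤ y)) := by
      ext q
      simp only [Finset.mem_filter, Finset.mem_insert]
      constructor
      · rintro ⟨h1, h2⟩
        by_cases hq : q = y + 1
        · exact Or.inl hq
        · exact Or.inr ⟨h1, by omega⟩
      · rintro (rfl | ⟨h1, h2⟩)
        · exact ⟨h, le_rfl⟩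
        · exact ⟨h1, by omega⟩
    rw [e, Finset.prod_insert]
    intro h1
    have := (Finset.mem_filter.1 h1).2
    omega
  · congr 1
    ext q
    simp only [Finset.mem_filter]
    constructor
    · rintro ⟨h1, h2⟩
      refine ⟨h1, ?_⟩
      by_contra h3
      have : q = y + 1 := by omega
      subst this; exact h h1
    · rintro ⟨h1, h2⟩; exact ⟨h1, by omega⟩

theorem sm_le_pow (m y : ℕ) (V : ℝ) (hV : 1 ≤ V) (h : ∀ p ∈ m.primeFactors, p ≤ y →
    ((p ^ m.factorization p : ℕ) : ℝ) ≤ V) : (sm m y : ℝ) ≤ V ^ y := by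
  unfold sm
  push_cast
  calc _ ≤ ∏ q ∈ m.primeFactors.filter (fun q => q ≤ y), V := by
        apply Finset.prod_le_prod
        · intros; positivity
        · intro q hq
          rw [Finset.mem_filter] at hq
          exact_mod_cast h q hq.1 hq.2
    _ = V ^ (m.primeFactors.filter (fun q => q ≤ y)).card := by simp
    _ ≤ V ^ y := by
        apply pow_le_pow_right₀ hV
        calc _ ≤ (Finset.Icc 1 y).card := by
              apply Finset.card_le_card
              intro q hq
              rw [Finset.mem_filter] at hq
              exact Finset.mem_Icc.2 ⟨(Nat.prime_of_mem_primeFactors hq.1).pos, hq.2⟩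
          _ = y := by simp


theorem floor_exp (u : ℝ) (hu : 2 ≤ u) : 2 ≤ ⌊Real.exp u⌋₊ ∧ u / 2 ≤ Real.log (⌊Real.exp u⌋₊ : ℝ) ∧
    Real.log (⌊Real.exp u⌋₊ : ℝ) ≤ u ∧ ((⌊Real.exp u⌋₊ : ℕ) : ℝ) ≤ Real.exp u := by
  have h1 : u + 1 ≤ Real.exp u := Real.add_one_le_exp u
  have h2 : 2 ≤ ⌊Real.exp u⌋₊ := Nat.le_floor (by push_cast; linarith)
  have h3 : ((⌊Real.exp u⌋₊ : ℕ) : ℝ) ≤ Real.exp u := Nat.floor_le (Real.exp_pos u).le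
  have h4 : Real.exp u < (⌊Real.exp u⌋₊ : ℝ) + 1 := Nat.lt_floor_add_one _
  have h5 : (2 : ℝ) ≤ (⌊Real.exp u⌋₊ : ℝ) := by exact_mod_cast h2
  refine ⟨h2, ?_, ?_, h3⟩
  · rw [Real.le_log_iff_exp_le (by linarith)]
    have h6 : Real.exp u = Real.exp (u / 2) * Real.exp (u / 2) := by
      rw [← Real.exp_add]; congr 1; ring
    have h7 : u / 2 + 1 ≤ Real.exp (u / 2) := Real.add_one_le_exp _
    nlinarith
  · rw [Real.log_le_iff_le_exp (by linarith)]
    exact h3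

theorem pow_gt (X c : ℝ) (hX : 1 ≤ X) (N w J : ℕ) (hw : 2 ≤ w) (hN : (N : ℝ) ≤ Real.exp (32 * X))
    (hc : c ≤ Real.log w) (hJ : 96 * X < ((J : ℝ) + 1) * c) : 2 * N ^ 2 < w ^ (J + 1) := by
  have h1 : (2 : ℝ) ≤ Real.exp (32 * X) := by have := Real.add_one_le_exp (32 * X); linarith
  have h2 : (2 : ℝ) * N ^ 2 ≤ Real.exp (96 * X) := by
    calc (2 : ℝ) * N ^ 2 ≤ Real.exp (32 * X) * (Real.exp (32 * X)) ^ 2 := by gcongr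
      _ = Real.exp (96 * X) := by rw [← Real.exp_nat_mul, ← Real.exp_add]; congr 1; push_cast; ring
  have hw0 : (0 : ℝ) < w := by exact_mod_cast (by omega : 0 < w)
  have h3 : Real.exp (96 * X) < (w : ℝ) ^ (J + 1) := by
    rw [← Real.lt_log_iff_exp_lt (by positivity), Real.log_pow]
    refine hJ.trans_le ?_
    push_cast
    exact mul_le_mul_of_nonneg_left hc (by positivity)
  exact_mod_cast h2.trans_lt h3

theorem cover (X κ : ℝ) (hX : 1 ≤ X) (hκ : 1 ≤ κ) (m I : ℕ) (hm : m ≠ 0) (hI : X ≤ I) :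
    sm m ⌊Real.exp X⌋₊ ≤ ⌊Real.exp (8 * X)⌋₊ ∨
    (∃ p v : ℕ, p.Prime ∧ p ≤ ⌊Real.exp X⌋₊ ∧ p ^ v ∣ m ∧ Real.exp (4 * X) < ((p ^ v : ℕ) : ℝ)) ∨
    (∃ p v : ℕ, p.Prime ∧ p ≤ ⌊Real.exp κ⌋₊ ∧ p ^ v ∣ m ∧
      Real.exp (8 * X / (⌊Real.exp κ⌋₊ : ℝ)) < ((p ^ v : ℕ) : ℝ)) ∨
    ∃ i ∈ Finset.range I, κ < X / 2 ^ i ∧ ∃ a b : ℕ, a * b = m ∧ a.Coprime b ∧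
      (∀ p ∈ a.primeFactors, p ≤ ⌊Real.exp (X / 2 ^ i)⌋₊) ∧
      (∀ p ∈ b.primeFactors, ⌊Real.exp (X / 2 ^ (i + 1))⌋₊ < p) ∧
      Real.exp (4 * X) ≤ a ∧ a ≤ ⌊Real.exp (8 * X)⌋₊ := by
  classical
  set D := ⌊Real.exp (8 * X)⌋₊ with hD
  set y0 := ⌊Real.exp X⌋₊ with hy0
  set K := ⌊Real.exp κ⌋₊ with hK
  by_cases c1 : sm m y0 ≤ D
  · exact Or.inl c1
  right
  by_cases c2 : ∃ p v : ℕ, p.Prime ∧ p ≤ y0 ∧ p ^ v ∣ m ∧ Real.exp (4 * X) < ((p ^ v : ℕ) : ℝ)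
  · exact Or.inl c2
  right
  by_cases c3 : ∃ p v : ℕ, p.Prime ∧ p ≤ K ∧ p ^ v ∣ m ∧
      Real.exp (8 * X / (K : ℝ)) < ((p ^ v : ℕ) : ℝ)
  · exact Or.inl c3
  right
  push Not at c1 c2 c3
  have hex : ∃ y, D < sm m y := ⟨y0, c1⟩
  have hD1 : 1 ≤ D := Nat.le_floor (by push_cast; exact Real.one_le_exp (by linarith))
  obtain ⟨y, hy⟩ : ∃ y, y = Nat.find hex := ⟨_, rfl⟩
  have hys : D < sm m y := by rw [hy]; exact Nat.find_spec hex
  have hy_le : y ≤ y0 := by rw [hy]; exact Nat.find_min' hex c1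
  rcases y with _ | y
  · rw [sm_zero] at hys; omega
  have hyp : sm m y ≤ D := by
    have := Nat.find_min hex (m := y) (by omega)
    omega
  have hpm : y + 1 ∈ m.primeFactors := by
    by_contra h
    rw [sm_succ, if_neg h] at hys
    omega
  have hpp := Nat.prime_of_mem_primeFactors hpm
  have hbig : Real.exp (8 * X) < (sm m (y + 1) : ℝ) := Nat.lt_of_floor_lt hys
  have hpK : ¬ (y + 1 ≤ K) := by
    intro hle
    have hK0 : (0 : ℝ) < K := by exact_mod_cast (by omega : 0 < K)
    have h1 := sm_le_pow m (y + 1) (Real.exp (8 * X / (K : ℝ))) (Real.one_le_exp (by positivity)) (by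
      intro p hp hpy
      exact c3 p _ (Nat.prime_of_mem_primeFactors hp) (hpy.trans hle) (Nat.ordProj_dvd m p))
    have h2 : Real.exp (8 * X / (K : ℝ)) ^ (y + 1) ≤ Real.exp (8 * X / (K : ℝ)) ^ K :=
      pow_le_pow_right₀ (Real.one_le_exp (by positivity)) hle
    rw [← Real.exp_nat_mul (8 * X / (K : ℝ)) K, mul_div_cancel₀ _ hK0.ne'] at h2
    linarith
  have hpK' : Real.exp κ < ((y + 1 : ℕ) : ℝ) := Nat.lt_of_floor_lt (by omega)
  have hp0 : (0 : ℝ) < ((y + 1 : ℕ) : ℝ) := by positivity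
  have hκp : κ < Real.log ((y + 1 : ℕ) : ℝ) := by rwa [Real.lt_log_iff_exp_lt hp0]
  have hpX : Real.log ((y + 1 : ℕ) : ℝ) ≤ X := by
    rw [Real.log_le_iff_le_exp hp0]
    exact (Nat.le_floor_iff (Real.exp_pos X).le).1 hy_le
  set l := Real.log ((y + 1 : ℕ) : ℝ) with hl
  have hexi : ∃ i : ℕ, X / 2 ^ (i + 1) < l := by
    obtain ⟨i, hi⟩ := pow_unbounded_of_one_lt X (by norm_num : (1 : ℝ) < 2)
    refine ⟨i, ?_⟩
    rw [div_lt_iff₀ (by positivity)]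
    have : (2 : ℝ) ^ i ≤ 2 ^ (i + 1) := pow_le_pow_right₀ (by norm_num) (by omega)
    have h2 : (0 : ℝ) < 2 ^ (i + 1) := by positivity
    nlinarith
  obtain ⟨i, hi⟩ : ∃ i, i = Nat.find hexi := ⟨_, rfl⟩
  have hi1 : X / 2 ^ (i + 1) < l := by rw [hi]; exact Nat.find_spec hexi
  have hi2 : l ≤ X / 2 ^ i := by
    rcases i with _ | i
    · simpa using hpX
    · have := Nat.find_min hexi (m := i) (by omega)
      linarith
  have hmm := sm_mul_ro m y hm
  refine ⟨i, ?_, by linarith, sm m y, ro m y, hmm, sm_coprime m y hm, ?_, ?_, ?_, hyp⟩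
  · rw [Finset.mem_range]
    have h1 : (1 : ℝ) < X / 2 ^ i := by linarith
    rw [one_lt_div (by positivity)] at h1
    have h2 : ((i : ℕ) : ℝ) < 2 ^ i := by exact_mod_cast (Nat.lt_two_pow_self (n := i))
    have : (i : ℝ) < I := by linarith
    exact_mod_cast this
  · intro p hp
    have h1 := sm_pf m y p hp
    apply Nat.le_floor
    calc (p : ℝ) ≤ ((y + 1 : ℕ) : ℝ) := by exact_mod_cast (by omega)
      _ ≤ _ := by rwa [← Real.log_le_iff_le_exp hp0]
  · intro p hp
    have h1 := ro_pf m y p hp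
    rw [Nat.floor_lt (Real.exp_pos _).le]
    calc Real.exp (X / 2 ^ (i + 1)) < ((y + 1 : ℕ) : ℝ) := by rwa [← Real.lt_log_iff_exp_lt hp0]
      _ ≤ p := by exact_mod_cast h1
  · rw [sm_succ, if_pos hpm] at hbig
    have h1 := c2 (y + 1) (m.factorization (y + 1)) hpp hy_le (Nat.ordProj_dvd m (y + 1))
    have h2 : Real.exp (8 * X) = Real.exp (4 * X) * Real.exp (4 * X) := by
      rw [← Real.exp_add]; congr 1; ring
    rw [h2, Nat.cast_mul] at hbig
    by_contra h3
    push Not at h3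
    have h4 : (((y + 1) ^ m.factorization (y + 1) : ℕ) : ℝ) * (sm m y : ℝ) ≤
        Real.exp (4 * X) * Real.exp (4 * X) :=
      mul_le_mul h1 h3.le (Nat.cast_nonneg _) (Real.exp_pos _).le
    linarith


def HC (M C : ℝ) : Prop := ∀ (z : ℕ) (β : ℝ), 2 ≤ z → 0 ≤ β →
    β ≤ 1 / 4 → β * Real.log z ≤ M → 0 ≤ Real.log (Real.log z) + C ∧
    ∀ (j : ℕ) (A : Finset ℕ),
    (∀ a ∈ A, a ≠ 0 ∧ (∀ p ∈ a.primeFactors, p ≤ z) ∧ a.primeFactors.card = j) →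
    ∑ a ∈ A, ff a * (a : ℝ) ^ β ≤ (Real.log (Real.log z) + C) ^ j / (j.factorial : ℝ)

theorem err_le (X u : ℝ) (hu0 : 2 ≤ u) (hu : u ≤ X) :
    ((⌊Real.exp u⌋₊ : ℕ) : ℝ) ^ 6 * ((⌊Real.exp (8 * X)⌋₊ : ℕ) : ℝ) ^ 2 ≤ Real.exp (22 * X) := by
  have h1 : ((⌊Real.exp u⌋₊ : ℕ) : ℝ) ≤ Real.exp X :=
    (Nat.floor_le (Real.exp_pos _).le).trans (Real.exp_le_exp.2 hu)
  have h2 : ((⌊Real.exp (8 * X)⌋₊ : ℕ) : ℝ) ≤ Real.exp (8 * X) := Nat.floor_le (Real.exp_pos _).le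
  calc _ ≤ Real.exp X ^ 6 * Real.exp (8 * X) ^ 2 := by gcongr
    _ = _ := by
      rw [← Real.exp_nat_mul, ← Real.exp_nat_mul, ← Real.exp_add]; congr 1; push_cast; ring

theorem bound_C1 (M C R X U : ℝ) (hM : 0 ≤ M) (hC : HC M C) (hR : 1 ≤ R) (hX : 2 ≤ X)
    (hU : Real.log X + C ≤ U) (N k : ℕ) (hN : (N : ℝ) ≤ Real.exp (32 * X)) (hk : (k : ℝ) ≤ R * U)
    (T : Finset ℕ) (hT : ∀ n ∈ T, 1 ≤ n ∧ n ≤ N ∧ ⌊Real.exp (8 * X)⌋₊ ≤ n ∧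
      (n ^ 2 + 1).primeFactors.card = k ∧ sm (n ^ 2 + 1) ⌊Real.exp X⌋₊ ≤ ⌊Real.exp (8 * X)⌋₊) :
    (T.card : ℝ) ≤ 768 * (2 * R) ^ 192 * (Real.exp (32 * X) / (32 * X) *
      (U ^ (k - 1) / ((k - 1).factorial : ℝ))) + Real.exp (22 * X) := by
  obtain ⟨f1, f2, f3, f4⟩ := floor_exp X hX
  obtain ⟨hW, hA⟩ := hC ⌊Real.exp X⌋₊ 0 f1 le_rfl (by norm_num) (by simpa using hM)
  have hlogpos : 0 < Real.log (⌊Real.exp X⌋₊ : ℝ) := by linarith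
  have hWU : Real.log (Real.log (⌊Real.exp X⌋₊ : ℝ)) + C ≤ U := by
    have := Real.log_le_log hlogpos f3
    linarith
  have h := gen_T N ⌊Real.exp X⌋₊ ⌊Real.exp X⌋₊ ⌊Real.exp (8 * X)⌋₊ 192 k R U _ 1 0 f1 hR hW hWU hk
    one_pos le_rfl (pow_gt X (X / 2) (by linarith) N _ 192 f1 hN f2 (by push_cast; linarith)) hA T (by
      intro n hn
      obtain ⟨a1, a2, a3, a4, a5⟩ := hT n hn
      have hm : n ^ 2 + 1 ≠ 0 := by positivity
      refine ⟨a1, a2, a3, a4, sm (n ^ 2 + 1) ⌊Real.exp X⌋₊, ro (n ^ 2 + 1) ⌊Real.exp X⌋₊,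
        sm_mul_ro _ _ hm, sm_coprime _ _ hm, sm_pf _ _, ro_pf _ _, ?_, a5⟩
      have : sm (n ^ 2 + 1) ⌊Real.exp X⌋₊ ≠ 0 := by
        intro h0
        have := sm_mul_ro (n ^ 2 + 1) ⌊Real.exp X⌋₊ hm
        rw [h0, zero_mul] at this
        omega
      exact_mod_cast Nat.one_le_iff_ne_zero.2 this)
  have he := err_le X X hX le_rfl
  have hU0 : 0 ≤ U := hW.trans hWU
  rw [Real.one_rpow, one_mul] at h
  have h2 : 12 * (N : ℝ) / Real.log (⌊Real.exp X⌋₊ : ℝ) ≤ 768 * (Real.exp (32 * X) / (32 * X)) := by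
    calc 12 * (N : ℝ) / Real.log (⌊Real.exp X⌋₊ : ℝ) ≤ 12 * Real.exp (32 * X) / (X / 2) := by gcongr
      _ = _ := by field_simp; norm_num
  have h3 := mul_le_mul_of_nonneg_right h2
    (show 0 ≤ (2 * R) ^ 192 * (U ^ (k - 1) / ((k - 1).factorial : ℝ)) by positivity)
  calc (T.card : ℝ) ≤ _ := h
    _ ≤ _ := add_le_add h3 he
    _ = _ := by ring

theorem exp_decay (i : ℕ) : (2 : ℝ) ^ i * Real.exp (-(2 : ℝ) ^ i) ≤ 2 * (1 / 2) ^ i := by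
  have h0 : (0 : ℝ) < 2 ^ i := by positivity
  have h1 := Real.quadratic_le_exp_of_nonneg h0.le
  rw [Real.exp_neg, one_div, inv_pow, ← div_eq_mul_inv, ← div_eq_mul_inv,
    div_le_div_iff₀ (Real.exp_pos _) h0]
  nlinarith

theorem bound_Ti (C R X U : ℝ) (hR : 1 ≤ R) (hC : HC (96 * Real.log (2 * R) + 1 / 4) C) (hX : 2 ≤ X)
    (hU : Real.log X + C ≤ U) (N k i : ℕ) (hN : (N : ℝ) ≤ Real.exp (32 * X)) (hk : (k : ℝ) ≤ R * U)
    (hi : 384 * Real.log (2 * R) + 4 < X / 2 ^ i)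
    (T : Finset ℕ) (hT : ∀ n ∈ T, 1 ≤ n ∧ n ≤ N ∧ ⌊Real.exp (8 * X)⌋₊ ≤ n ∧
      (n ^ 2 + 1).primeFactors.card = k ∧ ∃ a b : ℕ, a * b = n ^ 2 + 1 ∧ a.Coprime b ∧
        (∀ p ∈ a.primeFactors, p ≤ ⌊Real.exp (X / 2 ^ i)⌋₊) ∧
        (∀ p ∈ b.primeFactors, ⌊Real.exp (X / 2 ^ (i + 1))⌋₊ < p) ∧ Real.exp (4 * X) ≤ a ∧
        a ≤ ⌊Real.exp (8 * X)⌋₊) :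
    (T.card : ℝ) ≤ 3072 * (1 / 2) ^ i * (Real.exp (32 * X) / (32 * X) *
      (U ^ (k - 1) / ((k - 1).factorial : ℝ))) + Real.exp (22 * X) := by
  set l := Real.log (2 * R) with hl
  have hl0 : 0 ≤ l := Real.log_nonneg (by linarith)
  have hp : (1 : ℝ) ≤ 2 ^ i := one_le_pow₀ (by norm_num)
  have hp0 : (0 : ℝ) < 2 ^ i := by linarith
  have hX0 : 0 < X := by linarith
  have hz2 : 2 ≤ X / 2 ^ i := by linarith
  have hhalf : X / 2 ^ (i + 1) = X / 2 ^ i / 2 := by rw [pow_succ]; field_simp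
  have hw2 : 2 ≤ X / 2 ^ (i + 1) := by rw [hhalf]; linarith
  have hzX : X / 2 ^ i ≤ X := div_le_self hX0.le hp
  obtain ⟨f1, f2, f3, f4⟩ := floor_exp _ hz2
  obtain ⟨g1, g2, g3, g4⟩ := floor_exp _ hw2
  set z := ⌊Real.exp (X / 2 ^ i)⌋₊
  set w := ⌊Real.exp (X / 2 ^ (i + 1))⌋₊
  set β := (96 * l + 1 / 4) * 2 ^ i / X with hβ
  have hβ0 : 0 ≤ β := by positivity
  have hβe : β * (X / 2 ^ i) = 96 * l + 1 / 4 := by rw [hβ]; field_simp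
  have hβ1 : β ≤ 1 / 4 := by
    by_contra hcon
    push Not at hcon
    nlinarith
  have hβz : β * Real.log z ≤ 96 * l + 1 / 4 := by
    rw [← hβe]; exact mul_le_mul_of_nonneg_left f3 hβ0
  obtain ⟨hW, hA⟩ := hC z β f1 hβ0 hβ1 hβz
  have hWU : Real.log (Real.log (z : ℝ)) + C ≤ U := by
    have := Real.log_le_log (by linarith : 0 < Real.log (z : ℝ)) (f3.trans hzX)
    linarith
  have hU0 : 0 ≤ U := hW.trans hWU
  have h := gen_T N w z ⌊Real.exp (8 * X)⌋₊ (384 * 2 ^ i) k R U _ (Real.exp (4 * X)) β g1 hR hW hWU hk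
    (Real.exp_pos _) hβ0
    (pow_gt X (X / 2 ^ (i + 1) / 2) (by linarith) N _ _ g1 hN g2 (by
      rw [hhalf]; push_cast
      have : ((384 * 2 ^ i + 1 : ℝ)) * (X / 2 ^ i / 2 / 2) = 96 * X + X / 2 ^ i / 4 := by
        field_simp; ring
      rw [this]; linarith)) hA T hT
  have he := err_le X (X / 2 ^ (i + 1)) hw2 (by rw [hhalf]; linarith)
  have e1 : Real.exp (4 * X) ^ (-β) * (2 * R) ^ (384 * 2 ^ i) = Real.exp (-(2 : ℝ) ^ i) := by
    have h2R : 2 * R = Real.exp l := by rw [hl, Real.exp_log (by linarith)]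
    rw [h2R, ← Real.exp_nat_mul, ← Real.exp_mul, ← Real.exp_add]
    congr 1
    rw [hβ]; push_cast; field_simp; ring
  have h2 : 12 * (N : ℝ) / Real.log (w : ℝ) ≤ 1536 * 2 ^ i * (Real.exp (32 * X) / (32 * X)) := by
    calc 12 * (N : ℝ) / Real.log (w : ℝ) ≤ 12 * Real.exp (32 * X) / (X / 2 ^ (i + 1) / 2) := by gcongr
      _ = _ := by rw [hhalf]; field_simp; norm_num
  set Λ := U ^ (k - 1) / ((k - 1).factorial : ℝ) with hΛ
  have hΛ0 : 0 ≤ Λ := by positivity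
  rw [← mul_assoc (Real.exp (4 * X) ^ (-β)), e1] at h
  have h3 := mul_le_mul_of_nonneg_right h2 (show 0 ≤ Real.exp (-(2 : ℝ) ^ i) * Λ by positivity)
  have h4 := mul_le_mul_of_nonneg_right (exp_decay i)
    (show 0 ≤ 1536 * (Real.exp (32 * X) / (32 * X) * Λ) by positivity)
  calc (T.card : ℝ) ≤ _ := h
    _ ≤ _ := add_le_add h3 he
    _ ≤ 2 * (1 / 2) ^ i * (1536 * (Real.exp (32 * X) / (32 * X) * Λ)) + Real.exp (22 * X) := by
        refine add_le_add (le_trans (le_of_eq ?_) h4) le_rfl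
        ring
    _ = _ := by ring

theorem bound_E1 (X : ℝ) (hX : 2 ≤ X) (N : ℕ) (hN : (N : ℝ) ≤ Real.exp (32 * X)) (T : Finset ℕ)
    (hT : ∀ n ∈ T, 1 ≤ n ∧ n ≤ N ∧ ∃ p v : ℕ, p.Prime ∧ p ≤ ⌊Real.exp X⌋₊ ∧ p ^ v ∣ n ^ 2 + 1 ∧
      Real.exp (4 * X) < ((p ^ v : ℕ) : ℝ)) : (T.card : ℝ) ≤ 4 * Real.exp (29 * X) := by
  have h := exc_count N _ _ (Real.exp_pos (4 * X)) T hT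
  obtain ⟨f1, f2, f3, f4⟩ := floor_exp X hX
  have h1 : 2 * (N : ℝ) / Real.exp (4 * X) ≤ 2 * Real.exp (28 * X) := by
    rw [div_le_iff₀ (Real.exp_pos _), mul_assoc, ← Real.exp_add,
      show 28 * X + 4 * X = 32 * X by ring]
    linarith
  have h2 : 1 ≤ Real.exp (28 * X) := Real.one_le_exp (by linarith)
  calc (T.card : ℝ) ≤ _ := h
    _ ≤ Real.exp X * (4 * Real.exp (28 * X)) := by
        apply mul_le_mul f4 (by linarith) (by positivity) (by positivity)
    _ = 4 * (Real.exp X * Real.exp (28 * X)) := by ring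
    _ = _ := by rw [← Real.exp_add]; congr 2; ring

theorem bound_E2 (X : ℝ) (hX : 2 ≤ X) (N K : ℕ) (hK : 5 ≤ K) (hN : (N : ℝ) ≤ Real.exp (32 * X))
    (T : Finset ℕ)
    (hT : ∀ n ∈ T, 1 ≤ n ∧ n ≤ N ∧ ∃ p v : ℕ, p.Prime ∧ p ≤ K ∧ p ^ v ∣ n ^ 2 + 1 ∧
      Real.exp (8 * X / K) < ((p ^ v : ℕ) : ℝ)) :
    (T.card : ℝ) ≤ 4 * K * Real.exp (32 * X - 8 * X / K) := by
  have h := exc_count N _ _ (Real.exp_pos (8 * X / K)) T hT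
  have hK' : (5 : ℝ) ≤ K := by exact_mod_cast hK
  have h0 : 8 * X / K ≤ 2 * X := by
    rw [div_le_iff₀ (by linarith)]; nlinarith
  have h1 : 2 * (N : ℝ) / Real.exp (8 * X / K) ≤ 2 * Real.exp (32 * X - 8 * X / K) := by
    rw [div_le_iff₀ (Real.exp_pos _), mul_assoc, ← Real.exp_add, sub_add_cancel]
    linarith
  have h2 : 1 ≤ Real.exp (32 * X - 8 * X / K) := Real.one_le_exp (by linarith)
  calc (T.card : ℝ) ≤ _ := h
    _ ≤ K * (4 * Real.exp (32 * X - 8 * X / K)) := by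
        apply mul_le_mul_of_nonneg_left _ (by linarith); linarith
    _ = _ := by ring


theorem absorb (R : ℝ) (hR : 1 ≤ R) (K : ℕ) (hK : 5 ≤ K) : ∃ X0 : ℝ, 2 ≤ X0 ∧ ∀ X : ℝ, X0 ≤ X →
    ∀ (k : ℕ) (U : ℝ), 1 ≤ k → (k : ℝ) ≤ R * Real.log (32 * X) → Real.log (32 * X) ≤ U →
    (4 * K + 7) * Real.exp (32 * X - 8 * X / K) ≤
      Real.exp (32 * X) / (32 * X) * (U ^ (k - 1) / ((k - 1).factorial : ℝ)) := by
  have hK' : (5 : ℝ) ≤ K := by exact_mod_cast hK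
  set c := R * Real.log R + 1 with hc
  have ho := isLittleO_rpow_exp_pos_mul_atTop c (show (0 : ℝ) < 1 / (4 * K) by positivity)
  have hb := ho.bound (show (0 : ℝ) < 1 / (4 * K + 7) by positivity)
  obtain ⟨y0, hy0⟩ := Filter.eventually_atTop.1 hb
  refine ⟨max 2 y0, le_max_left _ _, ?_⟩
  intro X hX k U hk1 hkR hLU
  have hX2 : 2 ≤ X := (le_max_left _ _).trans hX
  have hXy : y0 ≤ 32 * X := by have := (le_max_right (2 : ℝ) y0).trans hX; linarith
  have h1 := hy0 (32 * X) hXy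
  have hX0 : (0 : ℝ) < 32 * X := by linarith
  rw [Real.norm_of_nonneg (by positivity), Real.norm_of_nonneg (Real.exp_pos _).le,
    div_mul_eq_mul_div, one_mul, le_div_iff₀ (by positivity),
    show 1 / (4 * (K : ℝ)) * (32 * X) = 8 * X / K by field_simp; ring] at h1
  have hlogR : 0 ≤ Real.log R := Real.log_nonneg hR
  have hL : 0 ≤ Real.log (32 * X) := Real.log_nonneg (by linarith)
  have h2 := pow_fact_step R U hR (hL.trans hLU) k (hkR.trans (by gcongr)) (k - 1) 0 (by omega)
  simp only [pow_zero, Nat.factorial_zero, Nat.cast_one, div_one, zero_add] at h2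
  set Λ := U ^ (k - 1) / ((k - 1).factorial : ℝ) with hΛ
  have hU0 := hL.trans hLU
  have hΛ0 : 0 ≤ Λ := by positivity
  have h3 : R ^ (k - 1) ≤ (32 * X) ^ (R * Real.log R) := by
    rw [Real.rpow_def_of_pos hX0]
    calc R ^ (k - 1) ≤ R ^ k := pow_le_pow_right₀ hR (by omega)
      _ = Real.exp (k * Real.log R) := by rw [Real.exp_nat_mul, Real.exp_log (by linarith)]
      _ ≤ _ := by
        apply Real.exp_le_exp.2
        calc (k : ℝ) * Real.log R ≤ (R * Real.log (32 * X)) * Real.log R := by gcongr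
          _ = _ := by ring
  have h4 : 1 ≤ (32 * X) ^ (R * Real.log R) * Λ := h2.trans (by gcongr)
  have h5 : (32 * X) ^ c = (32 * X) ^ (R * Real.log R) * (32 * X) := by
    rw [hc, Real.rpow_add hX0, Real.rpow_one]
  rw [Real.exp_sub, ← mul_div_assoc, div_mul_eq_mul_div, div_le_div_iff₀ (Real.exp_pos _) hX0]
  have h6 : (4 * (K : ℝ) + 7) * (32 * X) ≤ Λ * Real.exp (8 * X / K) := by
    calc (4 * (K : ℝ) + 7) * (32 * X) = (4 * (K : ℝ) + 7) * (32 * X) * 1 := by ring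
      _ ≤ (4 * (K : ℝ) + 7) * (32 * X) * ((32 * X) ^ (R * Real.log R) * Λ) := by gcongr
      _ = Λ * ((32 * X) ^ c * (4 * K + 7)) := by rw [h5]; ring
      _ ≤ _ := by gcongr
  have h7 := mul_le_mul_of_nonneg_left h6 (Real.exp_pos (32 * X)).le
  linarith

theorem main_R1 (R : ℝ) (hR : 1 ≤ R) : ∃ A : ℝ, 0 < A ∧ ∃ B : ℝ, 0 < B ∧ ∃ X0 : ℝ, 2 ≤ X0 ∧
    ∀ X : ℝ, X0 ≤ X → ∀ N k : ℕ, (N : ℝ) ≤ Real.exp (32 * X) → 1 ≤ k →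
    (k : ℝ) ≤ R * Real.log (32 * X) →
    (((Finset.Icc 1 N).filter (fun n => (n ^ 2 + 1).primeFactors.card = k)).card : ℝ) ≤
      A * (Real.exp (32 * X) / (32 * X) *
        ((Real.log (32 * X) + B) ^ (k - 1) / ((k - 1).factorial : ℝ))) := by
  classical
  have hl0 : 0 ≤ Real.log (2 * R) := Real.log_nonneg (by linarith)
  obtain ⟨C, hC0, hC⟩ := sum_ff_le (96 * Real.log (2 * R) + 1 / 4)
  set κ := 384 * Real.log (2 * R) + 4 with hκ
  set K := ⌊Real.exp κ⌋₊ with hKdef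
  have hK : 5 ≤ K := by
    apply Nat.le_floor
    have := Real.add_one_le_exp κ
    push_cast; linarith
  have hK' : (5 : ℝ) ≤ K := by exact_mod_cast hK
  obtain ⟨X0, hX02, hX0⟩ := absorb R hR K hK
  refine ⟨768 * (2 * R) ^ 192 + 6144 + 1, by positivity, C + 1, by positivity, X0, hX02, ?_⟩
  intro X hX N k hN hk1 hkR
  have hX2 : 2 ≤ X := hX02.trans hX
  set U := Real.log (32 * X) + (C + 1) with hU
  have hL : 0 ≤ Real.log (32 * X) := Real.log_nonneg (by linarith)
  have hLX : Real.log X ≤ Real.log (32 * X) := Real.log_le_log (by linarith) (by linarith)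
  have habs := hX0 X hX k U hk1 hkR (by linarith)
  have hU1 : Real.log X + C ≤ U := by linarith
  have hkU : (k : ℝ) ≤ R * U := hkR.trans (mul_le_mul_of_nonneg_left (by linarith) (by linarith))
  set QL := Real.exp (32 * X) / (32 * X) * (U ^ (k - 1) / ((k - 1).factorial : ℝ)) with hQL
  have hQL0 : 0 ≤ QL := by
    have : 0 ≤ U := by linarith
    positivity
  set D := ⌊Real.exp (8 * X)⌋₊ with hD
  set I := ⌈X⌉₊ with hI
  set F := (Finset.Icc 1 N).filter (fun n => (n ^ 2 + 1).primeFactors.card = k) with hF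
  set G := F.filter (fun n => D ≤ n) with hG
  let P1 : ℕ → Prop := fun n => sm (n ^ 2 + 1) ⌊Real.exp X⌋₊ ≤ D
  let P2 : ℕ → Prop := fun n => ∃ p v : ℕ, p.Prime ∧ p ≤ ⌊Real.exp X⌋₊ ∧ p ^ v ∣ n ^ 2 + 1 ∧
      Real.exp (4 * X) < ((p ^ v : ℕ) : ℝ)
  let P3 : ℕ → Prop := fun n => ∃ p v : ℕ, p.Prime ∧ p ≤ K ∧ p ^ v ∣ n ^ 2 + 1 ∧
      Real.exp (8 * X / K) < ((p ^ v : ℕ) : ℝ)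
  let P4 : ℕ → ℕ → Prop := fun i n => κ < X / 2 ^ i ∧ ∃ a b : ℕ, a * b = n ^ 2 + 1 ∧ a.Coprime b ∧
        (∀ p ∈ a.primeFactors, p ≤ ⌊Real.exp (X / 2 ^ i)⌋₊) ∧
        (∀ p ∈ b.primeFactors, ⌊Real.exp (X / 2 ^ (i + 1))⌋₊ < p) ∧ Real.exp (4 * X) ≤ a ∧
        a ≤ D
  have hsub : F ⊆ Finset.range D ∪ (G.filter P1 ∪ (F.filter P2 ∪ (F.filter P3 ∪
      (Finset.range I).biUnion (fun i => G.filter (P4 i))))) := by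
    intro n hn
    simp only [Finset.mem_union, Finset.mem_range, Finset.mem_filter, Finset.mem_biUnion, hG]
    by_cases hnD : n < D
    · exact Or.inl hnD
    right
    have hDn : D ≤ n := by omega
    rcases cover X κ (by linarith) (by linarith) (n ^ 2 + 1) I (by positivity) (Nat.le_ceil X) with
      h | h | h | ⟨i, hi, h⟩
    · exact Or.inl ⟨⟨hn, hDn⟩, h⟩
    · exact Or.inr (Or.inl ⟨hn, h⟩)
    · exact Or.inr (Or.inr (Or.inl ⟨hn, h⟩))
    · exact Or.inr (Or.inr (Or.inr ⟨i, Finset.mem_range.1 hi, ⟨hn, hDn⟩, h⟩))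
  have hFm : ∀ n ∈ F, 1 ≤ n ∧ n ≤ N ∧ (n ^ 2 + 1).primeFactors.card = k := by
    intro n hn
    rw [hF, Finset.mem_filter, Finset.mem_Icc] at hn
    exact ⟨hn.1.1, hn.1.2, hn.2⟩
  have hGm : ∀ n ∈ G, 1 ≤ n ∧ n ≤ N ∧ D ≤ n ∧ (n ^ 2 + 1).primeFactors.card = k := by
    intro n hn
    rw [hG, Finset.mem_filter] at hn
    obtain ⟨a1, a2, a3⟩ := hFm n hn.1
    exact ⟨a1, a2, hn.2, a3⟩
  have b0 : ((Finset.range D).card : ℝ) ≤ Real.exp (8 * X) := by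
    rw [Finset.card_range]; exact Nat.floor_le (Real.exp_pos _).le
  have b1 := bound_C1 _ C R X U (by positivity) hC hR hX2 hU1 N k hN hkU (G.filter P1) (by
    intro n hn
    rw [Finset.mem_filter] at hn
    obtain ⟨a1, a2, a3, a4⟩ := hGm n hn.1
    exact ⟨a1, a2, a3, a4, hn.2⟩)
  have b2 := bound_E1 X hX2 N hN (F.filter P2) (by
    intro n hn
    rw [Finset.mem_filter] at hn
    obtain ⟨a1, a2, a3⟩ := hFm n hn.1
    exact ⟨a1, a2, hn.2⟩)
  have b3 := bound_E2 X hX2 N K hK hN (F.filter P3) (by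
    intro n hn
    rw [Finset.mem_filter] at hn
    obtain ⟨a1, a2, a3⟩ := hFm n hn.1
    exact ⟨a1, a2, hn.2⟩)
  have b4i : ∀ i ∈ Finset.range I, ((G.filter (P4 i)).card : ℝ) ≤
      3072 * (1 / 2) ^ i * QL + Real.exp (22 * X) := by
    intro i _
    by_cases hi : κ < X / 2 ^ i
    · apply bound_Ti C R X U hR hC hX2 hU1 N k i hN hkU hi
      intro n hn
      rw [Finset.mem_filter] at hn
      obtain ⟨a1, a2, a3, a4⟩ := hGm n hn.1
      exact ⟨a1, a2, a3, a4, hn.2.2⟩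
    · have : G.filter (P4 i) = ∅ := by
        apply Finset.filter_eq_empty_iff.2
        intro n _ h
        exact hi h.1
      rw [this, Finset.card_empty, Nat.cast_zero]
      positivity
  have b4 : (((Finset.range I).biUnion (fun i => G.filter (P4 i))).card : ℝ) ≤
      6144 * QL + Real.exp (24 * X) := by
    have h1 : (((Finset.range I).biUnion (fun i => G.filter (P4 i))).card : ℝ) ≤
        ∑ i ∈ Finset.range I, ((G.filter (P4 i)).card : ℝ) := by
      exact_mod_cast Finset.card_biUnion_le
    have h2 := h1.trans (Finset.sum_le_sum b4i)
    rw [Finset.sum_add_distrib, Finset.sum_const, Finset.card_range, nsmul_eq_mul,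
      ← Finset.sum_mul, ← Finset.mul_sum] at h2
    have h3 : ∑ i ∈ Finset.range I, (1 / 2 : ℝ) ^ i ≤ 2 := sum_geometric_two_le I
    have h4 : (I : ℝ) ≤ Real.exp (2 * X) := by
      have h5 := (Nat.ceil_lt_add_one (by linarith : 0 ≤ X)).le
      have := Real.add_one_le_exp (2 * X)
      linarith
    have h5 : (I : ℝ) * Real.exp (22 * X) ≤ Real.exp (24 * X) := by
      calc (I : ℝ) * Real.exp (22 * X) ≤ Real.exp (2 * X) * Real.exp (22 * X) := by gcongr
        _ = _ := by rw [← Real.exp_add]; congr 1; ring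
    have h6 : 3072 * (∑ i ∈ Finset.range I, (1 / 2 : ℝ) ^ i) * QL ≤ 3072 * 2 * QL := by gcongr
    linarith
  have hcard : (F.card : ℝ) ≤ ((Finset.range D).card : ℝ) + ((G.filter P1).card +
      ((F.filter P2).card + ((F.filter P3).card +
      ((Finset.range I).biUnion (fun i => G.filter (P4 i))).card))) := by
    have h := Finset.card_le_card hsub
    have c1 := Finset.card_union_le (Finset.range D) (G.filter P1 ∪ (F.filter P2 ∪ (F.filter P3 ∪
      (Finset.range I).biUnion (fun i => G.filter (P4 i)))))
    have c2 := Finset.card_union_le (G.filter P1) (F.filter P2 ∪ (F.filter P3 ∪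
      (Finset.range I).biUnion (fun i => G.filter (P4 i))))
    have c3 := Finset.card_union_le (F.filter P2) (F.filter P3 ∪
      (Finset.range I).biUnion (fun i => G.filter (P4 i)))
    have c4 := Finset.card_union_le (F.filter P3)
      ((Finset.range I).biUnion (fun i => G.filter (P4 i)))
    exact_mod_cast (by omega)
  have h0 : 8 * X / K ≤ 2 * X := by
    rw [div_le_iff₀ (by linarith)]; nlinarith
  have m1 : Real.exp (8 * X) ≤ Real.exp (32 * X - 8 * X / K) := Real.exp_le_exp.2 (by linarith)
  have m2 : Real.exp (22 * X) ≤ Real.exp (32 * X - 8 * X / K) := Real.exp_le_exp.2 (by linarith)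
  have m3 : Real.exp (24 * X) ≤ Real.exp (32 * X - 8 * X / K) := Real.exp_le_exp.2 (by linarith)
  have m4 : Real.exp (29 * X) ≤ Real.exp (32 * X - 8 * X / K) := Real.exp_le_exp.2 (by linarith)
  linarith


/-- **Lemma 3.4** (special case of a result of Tenenbaum). Let `R > 0` be fixed. There
exist positive constants `A = A(R)` and `B = B(R)` such that for all sufficiently
large `x` and all `1 ≤ k ≤ R·log log x`,
`#{n ≤ x : ω(n²+1) = k} ≤ A·x·(log log x + B)^(k-1)/((k-1)!·log x)`. -/
theorem count_omega_sq_add_one_eq (R : ℝ) (hR : 0 < R) :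
    ∃ A : ℝ, 0 < A ∧ ∃ B : ℝ, 0 < B ∧ ∃ x₀ : ℝ, ∀ x : ℝ, x ≥ x₀ →
      ∀ k : ℕ, 1 ≤ k → (k : ℝ) ≤ R * Real.log (Real.log x) →
        (((Finset.Icc 1 ⌊x⌋₊).filter
            (fun n => (n ^ 2 + 1).primeFactors.card = k)).card : ℝ) ≤
          A * x * (Real.log (Real.log x) + B) ^ (k - 1) /
            ((Nat.factorial (k - 1)) * Real.log x) := by
  obtain ⟨A, hA, B, hB, X0, hX0, h⟩ := main_R1 (max R 1) (le_max_right _ _)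
  refine ⟨A, hA, B, hB, Real.exp (32 * X0), ?_⟩
  intro x hx k hk1 hk
  have hx0 : 0 < x := (Real.exp_pos _).trans_le hx
  have hlog : 32 * X0 ≤ Real.log x := (Real.le_log_iff_exp_le hx0).2 hx
  have he : 32 * (Real.log x / 32) = Real.log x := by ring
  have h1 := h (Real.log x / 32) (by linarith) ⌊x⌋₊ k
  rw [he, Real.exp_log hx0] at h1
  have hll : 0 ≤ Real.log (Real.log x) := Real.log_nonneg (by linarith)
  refine (h1 (Nat.floor_le hx0.le) hk1
    (hk.trans (mul_le_mul_of_nonneg_right (le_max_left _ _) hll))).trans (le_of_eq ?_)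
  have : Real.log x ≠ 0 := by linarith
  have : ((k - 1).factorial : ℝ) ≠ 0 := by positivity
  field_simp
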